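/- arXiv:1904.00848 — 3 statements merged into one kernel-verified Lean document; each statement's English description precedes it below -/
import Mathlib

section
/- Let Ξ be a simple point measure on ℝ (a sum of Dirac masses at the points of a locally finite set L ⊂ ℝ). Fix α ∈ (0,1) and assume: (i) there are reals τ_ℓ > 0 for ℓ ≥ 1 with ∫_ℝ 1(|λ| > ℓ)/|λ|^{1+α} dΞ(λ) ≤ τ_ℓ; (ii) for every ℓ ≥ 1 the limit h_ℓ = lim_{ℓ'→∞} ∫_ℝ 1(ℓ < |λ| < ℓ')/λ dΞ(λ) exists. Let λ* ∈ ℝ∖L, let (γ_k)_{k∈ℤ} be strictly positive reals satisfying, for some γ̄, c > 0 and some α' with 0 < (1+α)α' < 1: |Σ_{k=0}^{m−1} γ_k − γ̄m| ≤ c m^{α'} and |Σ_{k=−m}^{−1} γ_k − γ̄m| ≤ c m^{α'} for all m ≥ 1, and let Λ be the weighted version of Ξ in which the k-th point of L after λ* carries weight γ_k for k ≥ 1, and the (1−k)-th point before λ* carries weight γ_k for k ≤ 0. Then for every z ∈ ℂ∖L the limit S(z) = lim_{ℓ→∞} ∫_{[−ℓ,ℓ]} 1/(λ − z) dΛ(λ)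 exists, and S is a meromorphic function on ℂ whose poles are exactly the points of L, each pole being simple. -/
open Filter Set Topology BigOperators

attribute [local instance] Classical.propDecidable

/-- Weight attached to a point `x` of `L` relative to the reference point `x0 ∉ L`:
the `k`-th point of `L` after `x0` gets weight `γ k` (`k ≥ 1`), and the `m`-th point
of `L` before `x0` gets weight `γ (1 - m)`. -/
noncomputable def weightFun (L : Set ℝ) (x0 : ℝ) (γ : ℤ → ℝ) (x : ℝ) : ℝ :=
  γ (if x0 < x then (Nat.card ↥(L ∩ Set.Ioc x0 x) : ℤ)
     else 1 - (Nat.card ↥(L ∩ Set.Ico x x0) : ℤ))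

open MeasureTheory in
theorem integral_Ioc_indicator_Ici_rpow {s a R r : ℝ} (hs : 0 < s) (hR : 0 < R) (ha : R < a)
    (har : a ≤ r) :
    ∫ t in Set.Ioc R r, (Set.Ici a).indicator (fun t => s * t ^ (-s - 1)) t
      = a ^ (-s) - r ^ (-s) := by
  rw [setIntegral_indicator measurableSet_Ici]
  have h1 : Set.Ioc R r ∩ Set.Ici a = Set.Icc a r := by
    ext t
    simp only [Set.mem_inter_iff, Set.mem_Ioc, Set.mem_Ici, Set.mem_Icc]
    constructor
    · rintro ⟨⟨_, h⟩, h'⟩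
      exact ⟨h', h⟩
    · rintro ⟨h, h'⟩
      exact ⟨⟨by linarith, h'⟩, h⟩
  rw [h1, integral_Icc_eq_integral_Ioc, ← intervalIntegral.integral_of_le har,
    intervalIntegral.integral_const_mul, integral_rpow]
  · have : -s - 1 + 1 = -s := by ring
    rw [this]
    field_simp
    ring
  · right
    refine ⟨by linarith, ?_⟩
    rw [Set.uIcc_of_le har]
    intro h
    linarith [h.1]

open MeasureTheory in
/-- Summation by parts: if the partial sums of `d` along increasing sizes `a` grow at most like
`t ^ β` with `β < s`, then `∑ d i * a i ^ (-s)` converges along increasing sizes. -/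
theorem exists_tendsto_sum_mul_rpow_neg {ι : Type*} (a : ι → ℝ)
    (hfin : ∀ r, {i | a i ≤ r}.Finite) (d : ι → ℝ) {s β C R : ℝ} (hs : 0 < s) (hβ0 : 0 ≤ β)
    (hβ : β < s) (hR : 1 ≤ R)
    (hD : ∀ t, R ≤ t → |∑ i ∈ (hfin t).toFinset, d i| ≤ C * t ^ β) :
    ∃ l, Tendsto (fun r => ∑ i ∈ (hfin r).toFinset with R < a i, d i * a i ^ (-s))
      atTop (𝓝 l) := by
  have hR0 : 0 < R := by linarith
  set E : ℝ → ℝ := fun t => ∑ i ∈ (hfin t).toFinset with R < a i, d i with hE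
  have hEbound : ∀ t, R ≤ t → |E t| ≤ 2 * C * t ^ β := by
    intro t ht
    have h1 : E t + ∑ i ∈ (hfin R).toFinset, d i = ∑ i ∈ (hfin t).toFinset, d i := by
      rw [← Finset.sum_filter_add_sum_filter_not (hfin t).toFinset (fun i => R < a i)]
      congr 1
      apply Finset.sum_congr _ (fun _ _ => rfl)
      ext i
      simp only [Finite.mem_toFinset, mem_ofPred_eq, Finset.mem_filter, not_lt]
      exact ⟨fun h => ⟨h.trans ht, h⟩, fun h => h.2⟩
    have h2 := hD t ht
    have h3 := hD R le_rfl
    have hC : 0 ≤ C := by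
      have : 0 ≤ C * R ^ β := (abs_nonneg _).trans h3
      exact nonneg_of_mul_nonneg_left this (Real.rpow_pos_of_pos hR0 _)
    have h4 : C * R ^ β ≤ C * t ^ β := by gcongr
    have h5 : E t = ∑ i ∈ (hfin t).toFinset, d i - ∑ i ∈ (hfin R).toFinset, d i := by
      linarith
    rw [h5]
    refine (abs_sub _ _).trans ?_
    linarith
  have hEind : ∀ r t, t ≤ r →
      E t = ∑ i ∈ (hfin r).toFinset with R < a i, (Set.Ici (a i)).indicator (fun _ => d i) t := by
    intro r t htr
    simp only [Set.indicator_apply, Set.mem_Ici, hE]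
    rw [← Finset.sum_filter, Finset.filter_filter]
    apply Finset.sum_congr _ (fun _ _ => rfl)
    ext i
    simp only [Finite.mem_toFinset, mem_ofPred_eq, Finset.mem_filter]
    exact ⟨fun h => ⟨h.1.trans htr, h.2, h.1⟩, fun h => ⟨h.2.2, h.2.1⟩⟩
  have hEmeas : Measurable E := by
    refine measurable_of_tendsto_metrizable (f := fun n : ℕ => fun t =>
      ∑ i ∈ (hfin n).toFinset with R < a i, (Set.Ici (a i)).indicator (fun _ => d i) t) ?_ ?_
    · intro n
      exact Finset.measurable_fun_sum _ (fun i _ => measurable_const.indicator measurableSet_Ici)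
    · rw [tendsto_pi_nhds]
      intro t
      apply tendsto_const_nhds.congr'
      filter_upwards [eventually_ge_atTop ⌈t⌉₊] with n hn
      exact hEind n t (Nat.ceil_le.mp hn)
  have hint : IntegrableOn (fun t => E t * (s * t ^ (-s - 1))) (Set.Ioi R) := by
    have h1 : IntegrableOn (fun t : ℝ => (2 * C * s) * t ^ (β - s - 1)) (Set.Ioi R) :=
      (integrableOn_Ioi_rpow_of_lt (by linarith) hR0).const_mul _
    refine Integrable.mono' h1 (by fun_prop) ?_
    filter_upwards [ae_restrict_mem measurableSet_Ioi] with t ht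
    have ht' : R < t := ht
    have ht0 : 0 < t := hR0.trans ht'
    have h2 := hEbound t ht'.le
    have h3 : β - s - 1 = β + (-s - 1) := by ring
    rw [norm_mul, Real.norm_eq_abs, Real.norm_of_nonneg (by positivity), h3, Real.rpow_add ht0]
    calc |E t| * (s * t ^ (-s - 1)) ≤ (2 * C * t ^ β) * (s * t ^ (-s - 1)) := by gcongr
      _ = _ := by ring
  have hparts : ∀ r, R ≤ r → ∑ i ∈ (hfin r).toFinset with R < a i, d i * a i ^ (-s)
      = E r * r ^ (-s) + ∫ t in R..r, E t * (s * t ^ (-s - 1)) := by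
    intro r hr
    have h1 : ∫ t in R..r, E t * (s * t ^ (-s - 1))
        = ∑ i ∈ (hfin r).toFinset with R < a i, d i * (a i ^ (-s) - r ^ (-s)) := by
      rw [intervalIntegral.integral_of_le hr]
      have h2 : ∫ t in Set.Ioc R r, E t * (s * t ^ (-s - 1))
          = ∫ t in Set.Ioc R r, ∑ i ∈ (hfin r).toFinset with R < a i,
            d i * (Set.Ici (a i)).indicator (fun t => s * t ^ (-s - 1)) t := by
        apply setIntegral_congr_fun measurableSet_Ioc
        intro t ht
        simp only
        rw [hEind r t ht.2, Finset.sum_mul]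
        apply Finset.sum_congr rfl
        intro i _
        by_cases h : t ∈ Set.Ici (a i) <;> simp [h]
      rw [h2, integral_finsetSum]
      · apply Finset.sum_congr rfl
        intro i hi
        simp only [Finite.mem_toFinset, mem_ofPred_eq, Finset.mem_filter] at hi
        rw [integral_const_mul, integral_Ioc_indicator_Ici_rpow hs hR0 hi.2 hi.1]
      · intro i _
        apply Integrable.const_mul
        apply Integrable.indicator _ measurableSet_Ici
        apply Integrable.const_mul
        exact (integrableOn_Ioi_rpow_of_lt (by linarith) hR0).mono_set Set.Ioc_subset_Ioi_self
    rw [h1, hE, Finset.sum_mul, ← Finset.sum_add_distrib]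
    apply Finset.sum_congr rfl
    intro i _
    ring
  have hzero : Tendsto (fun r => E r * r ^ (-s)) atTop (𝓝 0) := by
    have h1 : Tendsto (fun r : ℝ => (2 * C) * r ^ (-(s - β))) atTop (𝓝 ((2 * C) * 0)) :=
      (tendsto_rpow_neg_atTop (by linarith)).const_mul _
    rw [mul_zero] at h1
    apply squeeze_zero_norm' _ h1
    filter_upwards [eventually_ge_atTop R] with t ht
    have ht0 : 0 < t := hR0.trans_le ht
    have h3 : -(s - β) = β + (-s) := by ring
    rw [norm_mul, Real.norm_eq_abs, Real.norm_of_nonneg (by positivity), h3, Real.rpow_add ht0,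
      ← mul_assoc]
    have := hEbound t ht
    gcongr
  refine ⟨_, ((hzero.add (intervalIntegral_tendsto_integral_Ioi R hint tendsto_id)).congr' ?_)⟩
  filter_upwards [eventually_ge_atTop R] with r hr
  exact (hparts r hr).symm

theorem Finset.sum_card_filter_le (F : Finset ℝ) (g : ℕ → ℝ) :
    ∑ x ∈ F, g (F.filter (· ≤ x)).card = ∑ k ∈ Finset.range F.card, g (k + 1) := by
  induction F using Finset.induction_on_max with
  | empty => simp
  | insert a s ha ih =>
    have has : a ∉ s := fun h => lt_irrefl _ (ha a h)
    rw [Finset.sum_insert has, Finset.card_insert_of_notMem has, Finset.sum_range_succ, ← ih,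
      add_comm]
    congr 1
    · apply Finset.sum_congr rfl
      intro x hx
      congr 2
      rw [Finset.filter_insert, if_neg (not_le.mpr (ha x hx))]
    · rw [Finset.filter_true_of_mem, Finset.card_insert_of_notMem has]
      intro x hx
      rcases Finset.mem_insert.mp hx with rfl | h
      · exact le_rfl
      · exact (ha x h).le

theorem Finset.sum_card_filter_ge (F : Finset ℝ) (g : ℕ → ℝ) :
    ∑ x ∈ F, g (F.filter (x ≤ ·)).card = ∑ k ∈ Finset.range F.card, g (k + 1) := by
  induction F using Finset.induction_on_min with
  | empty => simp
  | insert a s ha ih =>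
    have has : a ∉ s := fun h => lt_irrefl _ (ha a h)
    rw [Finset.sum_insert has, Finset.card_insert_of_notMem has, Finset.sum_range_succ, ← ih,
      add_comm]
    congr 1
    · apply Finset.sum_congr rfl
      intro x hx
      congr 2
      rw [Finset.filter_insert, if_neg (not_le.mpr (ha x hx))]
    · rw [Finset.filter_true_of_mem, Finset.card_insert_of_notMem has]
      intro x hx
      rcases Finset.mem_insert.mp hx with rfl | h
      · exact le_rfl
      · exact (ha x h).le

section Weights

variable {L : Set ℝ} {x0 : ℝ} {γ : ℤ → ℝ}

theorem sum_weightFun_right {t : ℝ} {F : Finset ℝ} (hF : ∀ x, x ∈ F ↔ x ∈ L ∩ Set.Ioc x0 t) :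
    ∑ x ∈ F, weightFun L x0 γ x = ∑ k ∈ Finset.range F.card, γ (k + 1) := by
  have h := Finset.sum_card_filter_le F (fun n => γ n)
  push_cast at h
  rw [← h]
  apply Finset.sum_congr rfl
  intro x hx
  have hx' := (hF x).mp hx
  have : L ∩ Set.Ioc x0 x = ↑(F.filter (· ≤ x)) := by
    ext y
    simp only [Set.mem_inter_iff, Set.mem_Ioc, Finset.coe_filter, hF, Set.mem_ofPred_eq]
    exact ⟨fun h => ⟨⟨h.1, h.2.1, h.2.2.trans hx'.2.2⟩, h.2.2⟩, fun h => ⟨h.1.1, h.1.2.1, h.2⟩⟩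
  rw [weightFun, if_pos hx'.2.1, Nat.card_coe_set_eq, this, Set.ncard_coe_finset]

theorem sum_weightFun_left {t : ℝ} {F : Finset ℝ} (hF : ∀ x, x ∈ F ↔ x ∈ L ∩ Set.Ico t x0) :
    ∑ x ∈ F, weightFun L x0 γ x = ∑ k ∈ Finset.range F.card, γ (-k) := by
  have h := Finset.sum_card_filter_ge F (fun n => γ (1 - n))
  have h' : ∀ k : ℕ, γ (1 - ((k + 1 : ℕ) : ℤ)) = γ (-k) := fun k => by congr 1; push_cast; ring
  simp only [h'] at h
  rw [← h]
  apply Finset.sum_congr rfl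
  intro x hx
  have hx' := (hF x).mp hx
  have : L ∩ Set.Ico x x0 = ↑(F.filter (x ≤ ·)) := by
    ext y
    simp only [Set.mem_inter_iff, Set.mem_Ico, Finset.coe_filter, hF, Set.mem_ofPred_eq]
    exact ⟨fun h => ⟨⟨h.1, hx'.2.1.trans h.2.1, h.2.2⟩, h.2.1⟩, fun h => ⟨h.1.1, h.2, h.1.2.2⟩⟩
  rw [weightFun, if_neg (not_lt.mpr hx'.2.2.le), Nat.card_coe_set_eq, this, Set.ncard_coe_finset]

variable {γbar c α' : ℝ}

theorem abs_sum_shift_right_sub_le (hα' : 0 ≤ α')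
    (hγ : ∀ m : ℕ, 1 ≤ m →
      |(∑ k ∈ Finset.range m, γ (k : ℤ)) - γbar * (m : ℝ)| ≤ c * (m : ℝ) ^ α') (n : ℕ) :
    |(∑ k ∈ Finset.range n, γ ((k : ℤ) + 1)) - γbar * n|
      ≤ (c + |γ 0 - γbar|) * ((n : ℝ) + 1) ^ α' := by
  have h := hγ (n + 1) (by omega)
  rw [Finset.sum_range_succ'] at h
  push_cast at h
  have h1 : 1 ≤ ((n : ℝ) + 1) ^ α' := Real.one_le_rpow (by simp) hα'
  have h2 : |γ 0 - γbar| ≤ |γ 0 - γbar| * ((n : ℝ) + 1) ^ α' :=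
    le_mul_of_one_le_right (abs_nonneg _) h1
  have h3 := abs_sub (∑ k ∈ Finset.range n, γ ((k : ℤ) + 1) + γ 0 - γbar * (n + 1)) (γ 0 - γbar)
  have h4 : (∑ k ∈ Finset.range n, γ ((k : ℤ) + 1)) - γbar * n =
    ∑ k ∈ Finset.range n, γ ((k : ℤ) + 1) + γ 0 - γbar * (n + 1) - (γ 0 - γbar) := by ring
  rw [h4]
  linarith

theorem abs_sum_shift_left_sub_le (hα' : 0 < α') (hc : 0 ≤ c)
    (hγ : ∀ m : ℕ, 1 ≤ m →
      |(∑ k ∈ Finset.range m, γ (-(k : ℤ) - 1)) - γbar * (m : ℝ)| ≤ c * (m : ℝ) ^ α') (n : ℕ) :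
    |(∑ k ∈ Finset.range n, γ (-(k : ℤ))) - γbar * n|
      ≤ (c + |γ 0 - γbar|) * ((n : ℝ) + 1) ^ α' := by
  have h1 : 1 ≤ ((n : ℝ) + 1) ^ α' := Real.one_le_rpow (by simp) hα'.le
  have h2 : |γ 0 - γbar| ≤ |γ 0 - γbar| * ((n : ℝ) + 1) ^ α' :=
    le_mul_of_one_le_right (abs_nonneg _) h1
  rcases n with _ | m
  · simp; positivity
  · have h : |(∑ k ∈ Finset.range m, γ (-(k : ℤ) - 1)) - γbar * (m : ℝ)| ≤ c * (m : ℝ) ^ α' := by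
      rcases Nat.eq_zero_or_pos m with rfl | hm
      · simp [hα'.ne']
      · exact hγ m hm
    have h5 : c * (m : ℝ) ^ α' ≤ c * (((m + 1 : ℕ) : ℝ) + 1) ^ α' := by
      gcongr
      push_cast
      linarith
    rw [Finset.sum_range_succ']
    have h3 := abs_add_le (∑ k ∈ Finset.range m, γ (-(k : ℤ) - 1) - γbar * m) (γ 0 - γbar)
    have h4 : (∑ k ∈ Finset.range m, γ (-((k + 1 : ℕ) : ℤ)) + γ (-((0 : ℕ) : ℤ)))
        - γbar * ((m + 1 : ℕ) : ℝ) =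
      ∑ k ∈ Finset.range m, γ (-(k : ℤ) - 1) - γbar * m + (γ 0 - γbar) := by
      have : ∀ k : ℕ, γ (-((k + 1 : ℕ) : ℤ)) = γ (-(k : ℤ) - 1) := fun k => by
        congr 1; push_cast; ring
      simp only [this]
      push_cast
      simp only [neg_zero]
      ring
    rw [h4]
    linarith

end Weights

/-- Splitting a sum over `L ∩ [-t, t]` at a reference point `x0 ∉ L`. -/
theorem sum_inter_Icc_eq_add {L : Set ℝ} {x0 t : ℝ} (hx0 : x0 ∉ L) (ht : |x0| < t)
    {B F G : Finset ℝ} (hB : ∀ x, x ∈ B ↔ x ∈ L ∩ Set.Icc (-t) t)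
    (hF : ∀ x, x ∈ F ↔ x ∈ L ∩ Set.Ioc x0 t) (hG : ∀ x, x ∈ G ↔ x ∈ L ∩ Set.Ico (-t) x0)
    (f : ℝ → ℝ) : ∑ x ∈ B, f x = ∑ x ∈ F, f x + ∑ x ∈ G, f x := by
  obtain ⟨h1, h2⟩ := abs_lt.mp ht
  have hBFG : B = F.disjUnion G (by
      rw [Finset.disjoint_left]
      intro x hxF hxG
      exact lt_asymm ((hF x).mp hxF).2.1 ((hG x).mp hxG).2.2) := by
    ext x
    simp only [Finset.mem_disjUnion, hB, hF, hG, Set.mem_inter_iff, Set.mem_Icc, Set.mem_Ioc,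
      Set.mem_Ico]
    constructor
    · rintro ⟨hx, h, h'⟩
      rcases lt_trichotomy x x0 with h0 | rfl | h0
      · exact Or.inr ⟨hx, h, h0⟩
      · exact absurd hx hx0
      · exact Or.inl ⟨hx, h0, h'⟩
    · rintro (⟨hx, h, h'⟩ | ⟨hx, h, h'⟩)
      · exact ⟨hx, by linarith, h'⟩
      · exact ⟨hx, h, by linarith⟩
  rw [hBFG, Finset.sum_disjUnion]

/-- The counting function of `L` grows at most like `t ^ p` when `∑ |x| ^ (-p)` converges. -/
theorem card_le_mul_rpow {L : Set ℝ} {p T : ℝ} (hp : 0 ≤ p) (hT : 0 ≤ T)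
    (hsum : (∑' x : ↥{t | t ∈ L ∧ 1 < |t|}, ENNReal.ofReal (1 / |(x : ℝ)| ^ p))
      ≤ ENNReal.ofReal T) {t : ℝ} (ht : 1 ≤ t) {A B : Finset ℝ}
    (hA : ∀ x, x ∈ A ↔ x ∈ L ∩ Set.Icc (-1) 1) (hB : ∀ x, x ∈ B ↔ x ∈ L ∩ Set.Icc (-t) t) :
    (B.card : ℝ) ≤ (A.card + T) * t ^ p := by
  have ht1 : 1 ≤ t ^ p := Real.one_le_rpow ht hp
  have hsplit : B.card = (B.filter (1 < |·|)).card + (B.filter (¬ 1 < |·|)).card :=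
    (Finset.card_filter_add_card_filter_not _).symm
  have hAB : (B.filter (¬ 1 < |·|)).card ≤ A.card := by
    apply Finset.card_le_card
    intro x hx
    simp only [Finset.mem_filter, not_lt, hB, hA, Set.mem_inter_iff, Set.mem_Icc] at hx ⊢
    exact ⟨hx.1.1, abs_le.mp hx.2⟩
  have h1 : ∑ x ∈ B.filter (1 < |·|), 1 / |x| ^ p ≤ T := by
    rw [← ENNReal.ofReal_le_ofReal_iff hT,
      ENNReal.ofReal_sum_of_nonneg (fun _ _ => by positivity)]
    refine le_trans ?_ hsum
    rw [tsum_subtype {t | t ∈ L ∧ 1 < |t|} (fun x => ENNReal.ofReal (1 / |x| ^ p))]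
    refine le_trans (Finset.sum_le_sum ?_) (ENNReal.sum_le_tsum (B.filter (1 < |·|)))
    intro x hx
    rw [Finset.mem_filter, hB] at hx
    rw [Set.indicator_of_mem (show x ∈ {t | t ∈ L ∧ 1 < |t|} from ⟨hx.1.1, hx.2⟩)]
  have h2 : ((B.filter (1 < |·|)).card : ℝ) ≤ T * t ^ p := by
    calc ((B.filter (1 < |·|)).card : ℝ) = ∑ x ∈ B.filter (1 < |·|), (1 : ℝ) := by simp
      _ ≤ ∑ x ∈ B.filter (1 < |·|), (1 / |x| ^ p) * t ^ p := by
        apply Finset.sum_le_sum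
        intro x hx
        rw [Finset.mem_filter, hB] at hx
        have hx0 : 0 < |x| := by linarith [hx.2]
        rw [one_div, inv_mul_eq_div, one_le_div (by positivity)]
        exact Real.rpow_le_rpow hx0.le (abs_le.mpr hx.1.2) hp
      _ = (∑ x ∈ B.filter (1 < |·|), 1 / |x| ^ p) * t ^ p := by rw [Finset.sum_mul]
      _ ≤ T * t ^ p := by gcongr
  have h3 : ((B.filter (¬ 1 < |·|)).card : ℝ) ≤ A.card * t ^ p :=
    le_trans (by exact_mod_cast hAB) (le_mul_of_one_le_right (by positivity) ht1)
  rw [hsplit]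
  push_cast
  linarith

theorem exists_weightFun_sum_bounds {L : Set ℝ} (hLfin : ∀ a b : ℝ, (L ∩ Set.Icc a b).Finite)
    {p T x0 : ℝ} (hp : 1 ≤ p) (hT : 0 ≤ T)
    (hsum : (∑' x : ↥{t | t ∈ L ∧ 1 < |t|}, ENNReal.ofReal (1 / |(x : ℝ)| ^ p))
      ≤ ENNReal.ofReal T) (hx0 : x0 ∉ L) {γ : ℤ → ℝ} {γbar c α' : ℝ} (hγbar : 0 ≤ γbar)
    (hc : 0 ≤ c) (hα'pos : 0 < α') (hα' : p * α' ≤ 1)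
    (hγsum1 : ∀ m : ℕ, 1 ≤ m →
      |(∑ k ∈ Finset.range m, γ (k : ℤ)) - γbar * (m : ℝ)| ≤ c * (m : ℝ) ^ α')
    (hγsum2 : ∀ m : ℕ, 1 ≤ m →
      |(∑ k ∈ Finset.range m, γ (-(k : ℤ) - 1)) - γbar * (m : ℝ)| ≤ c * (m : ℝ) ^ α') :
    ∃ C, ∀ t, 1 ≤ t → |x0| < t → ∀ B : Finset ℝ, (∀ x, x ∈ B ↔ x ∈ L ∩ Set.Icc (-t) t) →
      |∑ x ∈ B, (if x0 < x then weightFun L x0 γ x - γbar else -(weightFun L x0 γ x - γbar))|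
          ≤ C * t ^ (p * α') ∧
      |∑ x ∈ B, weightFun L x0 γ x| ≤ C * t ^ p := by
  set K := c + |γ 0 - γbar| with hK
  have hK0 : 0 ≤ K := by positivity
  set A := (hLfin (-1) 1).toFinset with hA
  set M := (A.card : ℝ) + T + 1 with hM
  have hM0 : 0 ≤ M := by positivity
  refine ⟨2 * (K * M ^ α') + γbar * M, fun t ht htx B hB => ?_⟩
  have ht0 : 0 < t := by linarith
  have htp : 1 ≤ t ^ p := Real.one_le_rpow ht (by linarith)
  have hcard : (B.card : ℝ) + 1 ≤ M * t ^ p := by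
    have := card_le_mul_rpow (by linarith) hT hsum ht (A := A) (by simp [hA]) hB
    rw [hM, add_mul _ 1, one_mul]
    linarith
  have hFfin : (L ∩ Set.Ioc x0 t).Finite :=
    (hLfin x0 t).subset (Set.inter_subset_inter_right _ Set.Ioc_subset_Icc_self)
  have hGfin : (L ∩ Set.Ico (-t) x0).Finite :=
    (hLfin (-t) x0).subset (Set.inter_subset_inter_right _ Set.Ico_subset_Icc_self)
  set F := hFfin.toFinset with hFdef
  set G := hGfin.toFinset with hGdef
  have hF : ∀ x, x ∈ F ↔ x ∈ L ∩ Set.Ioc x0 t := fun x => hFfin.mem_toFinset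
  have hG : ∀ x, x ∈ G ↔ x ∈ L ∩ Set.Ico (-t) x0 := fun x => hGfin.mem_toFinset
  have hsplit := sum_inter_Icc_eq_add hx0 htx hB hF hG
  have hcardFG : (B.card : ℝ) = F.card + G.card := by simpa using hsplit (fun _ => 1)
  have hpow : ∀ n : ℕ, (n : ℝ) ≤ B.card →
      K * ((n : ℝ) + 1) ^ α' ≤ K * M ^ α' * t ^ (p * α') := by
    intro n hn
    rw [mul_assoc, Real.rpow_mul ht0.le, ← Real.mul_rpow hM0 (by positivity)]
    gcongr
    linarith
  have hF' : |∑ x ∈ F, (weightFun L x0 γ x - γbar)| ≤ K * M ^ α' * t ^ (p * α') := by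
    rw [Finset.sum_sub_distrib, sum_weightFun_right hF, Finset.sum_const, nsmul_eq_mul,
      mul_comm (F.card : ℝ)]
    exact (abs_sum_shift_right_sub_le hα'pos.le hγsum1 _).trans
      (hpow _ (by rw [hcardFG]; linarith [(Nat.cast_nonneg G.card : (0 : ℝ) ≤ _)]))
  have hG' : |∑ x ∈ G, (weightFun L x0 γ x - γbar)| ≤ K * M ^ α' * t ^ (p * α') := by
    rw [Finset.sum_sub_distrib, sum_weightFun_left hG, Finset.sum_const, nsmul_eq_mul,
      mul_comm (G.card : ℝ)]
    exact (abs_sum_shift_left_sub_le hα'pos hc hγsum2 _).trans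
      (hpow _ (by rw [hcardFG]; linarith [(Nat.cast_nonneg F.card : (0 : ℝ) ≤ _)]))
  constructor
  · rw [hsplit]
    have h1 : ∑ x ∈ F, (if x0 < x then weightFun L x0 γ x - γbar
        else -(weightFun L x0 γ x - γbar)) = ∑ x ∈ F, (weightFun L x0 γ x - γbar) :=
      Finset.sum_congr rfl fun x hx => if_pos ((hF x).mp hx).2.1
    have h2 : ∑ x ∈ G, (if x0 < x then weightFun L x0 γ x - γbar
        else -(weightFun L x0 γ x - γbar)) = -∑ x ∈ G, (weightFun L x0 γ x - γbar) := by
      rw [← Finset.sum_neg_distrib]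
      exact Finset.sum_congr rfl fun x hx => if_neg (not_lt.mpr ((hG x).mp hx).2.2.le)
    rw [h1, h2, ← sub_eq_add_neg]
    refine (abs_sub _ _).trans ?_
    have : 0 ≤ γbar * M * t ^ (p * α') := by positivity
    linarith
  · have h1 : ∑ x ∈ B, weightFun L x0 γ x = ∑ x ∈ F, (weightFun L x0 γ x - γbar)
        + ∑ x ∈ G, (weightFun L x0 γ x - γbar) + γbar * B.card := by
      rw [hsplit, hcardFG]
      simp only [Finset.sum_sub_distrib, Finset.sum_const, nsmul_eq_mul]
      ring
    have h2 : K * M ^ α' * t ^ (p * α') ≤ K * M ^ α' * t ^ p := by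
      gcongr
      exact mul_le_of_le_one_right (by linarith) (by nlinarith)
    have h3 : |γbar * (B.card : ℝ)| ≤ γbar * (M * t ^ p) := by
      rw [abs_of_nonneg (by positivity)]
      gcongr
      linarith
    rw [h1]
    refine (abs_add_three _ _ _).trans ?_
    linarith

theorem tsum_subtype_eq_sum {E : Type*} [AddCommMonoid E] [TopologicalSpace E] {L S : Set ℝ}
    (T : Finset L) (hS : ∀ x, x ∈ S ↔ ∃ h : x ∈ L, (⟨x, h⟩ : L) ∈ T) (f : ℝ → E) :
    ∑' x : S, f x = ∑ i ∈ T, f i := by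
  have h : S = ↑(T.map (Function.Embedding.subtype _)) := by
    ext x
    simp [hS]
  subst h
  rw [Finset.tsum_subtype' (T.map (Function.Embedding.subtype _)) f, Finset.sum_map]
  rfl

/-- If the weighted sums `∑ w x / x` converge along growing symmetric windows and `∑ w x / x ^ 2`
converges, then the windowed Stieltjes sums converge near the origin, and the contribution of the
distant points is holomorphic there. -/
theorem exists_differentiableOn_tendsto_stieltjes {L : Set ℝ}
    (hfin : ∀ r : ℝ, {i : L | |(i : ℝ)| ≤ r}.Finite) {w : ℝ → ℝ} (hw : ∀ x, 0 ≤ w x) {R H : ℝ}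
    (hR : 0 < R)
    (hH : Tendsto (fun r =>
      ∑ i ∈ (hfin r).toFinset.filter (fun i : L => R < |(i : ℝ)|), w i / (i : ℝ)) atTop (𝓝 H))
    (hsq : Summable (fun i : L => if R < |(i : ℝ)| then w i / (i : ℝ) ^ 2 else 0)) :
    ∃ G : ℂ → ℂ, DifferentiableOn ℂ G (Metric.ball 0 (R / 2)) ∧
      ∀ z ∈ Metric.ball (0 : ℂ) (R / 2),
        Tendsto (fun r => ∑ i ∈ (hfin r).toFinset, (w i : ℂ) / (((i : ℝ) : ℂ) - z)) atTop
          (𝓝 (∑ i ∈ (hfin R).toFinset, (w i : ℂ) / (((i : ℝ) : ℂ) - z) + G z)) := by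
  set g : L → ℂ → ℂ := fun i z =>
    if R < |(i : ℝ)| then (w i : ℂ) * z / ((i : ℝ) * (((i : ℝ) : ℂ) - z)) else 0 with hg
  have hnorm : ∀ (i : L) (z : ℂ), z ∈ Metric.ball (0 : ℂ) (R / 2) → R < |(i : ℝ)| →
      |(i : ℝ)| / 2 ≤ ‖((i : ℝ) : ℂ) - z‖ := by
    intro i z hz hi
    rw [mem_ball_zero_iff] at hz
    have h1 := norm_sub_norm_le ((i : ℝ) : ℂ) z
    rw [Complex.norm_real, Real.norm_eq_abs] at h1
    linarith
  have hne : ∀ (i : L) (z : ℂ), z ∈ Metric.ball (0 : ℂ) (R / 2) → R < |(i : ℝ)| →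
      ((i : ℝ) : ℂ) - z ≠ 0 := by
    intro i z hz hi
    rw [← norm_pos_iff]
    linarith [hnorm i z hz hi]
  have hne' : ∀ i : L, R < |(i : ℝ)| → (i : ℝ) ≠ 0 := by
    intro i hi
    rw [← abs_pos]
    linarith
  have hle : ∀ (i : L) (z : ℂ), z ∈ Metric.ball (0 : ℂ) (R / 2) →
      ‖g i z‖ ≤ R * (if R < |(i : ℝ)| then w i / (i : ℝ) ^ 2 else 0) := by
    intro i z hz
    by_cases hi : R < |(i : ℝ)|
    · have h1 := hnorm i z hz hi
      have h2 : 0 < |(i : ℝ)| := abs_pos.mpr (hne' i hi)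
      rw [mem_ball_zero_iff] at hz
      have hwi := hw i
      simp only [hg, if_pos hi]
      rw [norm_div, norm_mul, norm_mul, Complex.norm_real, Complex.norm_real,
        Real.norm_of_nonneg hwi, Real.norm_eq_abs, ← sq_abs (i : ℝ)]
      calc w i * ‖z‖ / (|(i : ℝ)| * ‖((i : ℝ) : ℂ) - z‖)
          ≤ w i * (R / 2) / (|(i : ℝ)| * (|(i : ℝ)| / 2)) := by gcongr
        _ = R * (w i / |(i : ℝ)| ^ 2) := by field_simp
    · simp [hg, hi]
  have hsum := hsq.mul_left R
  refine ⟨fun z => (H : ℂ) + ∑' i, g i z, ?_, ?_⟩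
  · apply DifferentiableOn.const_add
    refine Complex.differentiableOn_tsum_of_summable_norm hsum ?_ Metric.isOpen_ball hle
    intro i
    by_cases hi : R < |(i : ℝ)|
    · simp only [hg, if_pos hi]
      refine DifferentiableOn.div (by fun_prop) (by fun_prop) ?_
      intro z hz
      exact mul_ne_zero (by exact_mod_cast hne' i hi) (hne i z hz hi)
    · simp only [hg, if_neg hi]
      fun_prop
  · intro z hz
    have hgs : Summable (fun i => g i z) := Summable.of_norm_bounded hsum (fun i => hle i z hz)
    have hB : Tendsto (fun r => (hfin r).toFinset) atTop atTop := by
      apply tendsto_atTop_finset_of_monotone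
      · intro r s hrs i
        simp only [Finite.mem_toFinset, mem_ofPred_eq]
        exact fun h => h.trans hrs
      · intro i
        exact ⟨|(i : ℝ)|, by simp⟩
    have h1 := hgs.hasSum.comp hB
    have h2 : Tendsto (fun r =>
      ((∑ i ∈ (hfin r).toFinset.filter (fun i : L => R < |(i : ℝ)|), w i / (i : ℝ) : ℝ) : ℂ))
      atTop (𝓝 (H : ℂ)) := (Complex.continuous_ofReal.tendsto _).comp hH
    refine ((h2.add h1).const_add _).congr' ?_
    filter_upwards [eventually_ge_atTop R] with r hr
    rw [← Finset.sum_filter_not_add_sum_filter (hfin r).toFinset (fun i : L => R < |(i : ℝ)|)]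
    congr 1
    · apply Finset.sum_congr _ (fun _ _ => rfl)
      ext i
      simp only [Finite.mem_toFinset, mem_ofPred_eq, Finset.mem_filter, not_lt]
      exact ⟨fun h => ⟨h.trans hr, h⟩, fun h => h.2⟩
    · simp only [Function.comp_apply, hg]
      rw [← Finset.sum_filter]
      push_cast
      rw [← Finset.sum_add_distrib]
      apply Finset.sum_congr rfl
      intro i hi
      have hi' := (Finset.mem_filter.mp hi).2
      have h3 := hne i z hz hi'
      have h4 : ((i : ℝ) : ℂ) ≠ 0 := by exact_mod_cast hne' i hi'
      field_simp
      ring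

theorem finite_abs_le_subtype {L : Set ℝ} (hLfin : ∀ a b : ℝ, (L ∩ Set.Icc a b).Finite) (r : ℝ) :
    {i : L | |(i : ℝ)| ≤ r}.Finite := by
  refine Set.Finite.of_finite_image ((hLfin (-r) r).subset ?_) Subtype.val_injective.injOn
  rintro _ ⟨i, hi, rfl⟩
  exact ⟨i.2, abs_le.mp hi⟩

/-- Replacing the open window `|x| < r` by the closed window `|x| ≤ r` does not affect limits. -/
theorem tendsto_sum_closed_window {L : Set ℝ} (hfin : ∀ r : ℝ, {i : L | |(i : ℝ)| ≤ r}.Finite)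
    {f : ℝ → ℝ} {R h : ℝ}
    (hh : Tendsto (fun r : ℝ => ∑' x : ↥{t | t ∈ L ∧ R < |t| ∧ |t| < r}, f x) atTop (𝓝 h)) :
    Tendsto (fun r => ∑ i ∈ (hfin r).toFinset.filter (fun i : L => R < |(i : ℝ)|), f i)
      atTop (𝓝 h) := by
  have key : ∀ r, ∃ r' > r, ∑ i ∈ (hfin r).toFinset.filter (fun i : L => R < |(i : ℝ)|), f i
      = ∑' x : ↥{t | t ∈ L ∧ R < |t| ∧ |t| < r'}, f x := by
    intro r
    have hcl : IsClosed ((fun i : L => |(i : ℝ)|) '' {i : L | |(i : ℝ)| ≤ r + 1 ∧ r < |(i : ℝ)|}) :=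
      (((hfin (r + 1)).subset fun i hi => hi.1).image _).isClosed
    have hr : r ∉ (fun i : L => |(i : ℝ)|) '' {i : L | |(i : ℝ)| ≤ r + 1 ∧ r < |(i : ℝ)|} := by
      rintro ⟨i, hi, h⟩
      exact absurd hi.2 (by simp only at h; simp [h])
    obtain ⟨ε, hε, hball⟩ := Metric.isOpen_iff.mp hcl.isOpen_compl r hr
    have hpos : 0 < min ε 1 := by positivity
    refine ⟨r + min ε 1, by linarith, ?_⟩
    refine (tsum_subtype_eq_sum _ (fun x => ?_) f).symm
    simp only [Finset.mem_filter, Finite.mem_toFinset, mem_ofPred_eq]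
    constructor
    · rintro ⟨hx, hx1, hx2⟩
      refine ⟨hx, ?_, hx1⟩
      by_contra! hlt
      have hm1 := min_le_left ε 1
      have hm2 := min_le_right ε 1
      refine hball (a := |x|) ?_ ⟨⟨x, hx⟩, ⟨by simp only; linarith, hlt⟩, rfl⟩
      rw [Metric.mem_ball, Real.dist_eq, abs_of_pos (by linarith)]
      linarith
    · rintro ⟨hx, hx1, hx2⟩
      exact ⟨hx, hx2, by linarith⟩
  choose ρ hρ hρ' using key
  simp only [hρ']
  exact hh.comp (tendsto_atTop_mono (fun r => (hρ r).le) tendsto_id)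

/-- Existence and meromorphy of the principal-value Stieltjes transform
`S(z) = lim_{ℓ→∞} ∫_{[-ℓ,ℓ]} 1/(λ-z) dΛ(λ)` of the weighted point measure `Λ`:
`S` is holomorphic off `L` and has a simple pole at every point of `L`. -/
theorem weighted_stieltjes_exists_meromorphic
    (L : Set ℝ) (hLfin : ∀ a b : ℝ, (L ∩ Set.Icc a b).Finite)
    (α : ℝ) (hα : α ∈ Set.Ioo (0 : ℝ) 1)
    (τ : ℝ → ℝ) (hτpos : ∀ ℓ : ℝ, 1 ≤ ℓ → 0 < τ ℓ)
    (hτ : ∀ ℓ : ℝ, 1 ≤ ℓ →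
      (∑' x : ↥{t | t ∈ L ∧ ℓ < |t|}, ENNReal.ofReal (1 / |(x : ℝ)| ^ (1 + α)))
        ≤ ENNReal.ofReal (τ ℓ))
    (hH : ∀ ℓ : ℝ, 1 ≤ ℓ → ∃ hℓ : ℝ,
      Tendsto (fun ℓ' : ℝ => ∑' x : ↥{t | t ∈ L ∧ ℓ < |t| ∧ |t| < ℓ'}, (1 / (x : ℝ)))
        atTop (𝓝 hℓ))
    (x0 : ℝ) (hx0 : x0 ∉ L)
    (γ : ℤ → ℝ) (hγpos : ∀ k, 0 < γ k)
    (γbar c α' : ℝ) (hγbar : 0 < γbar) (hc : 0 < c)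
    (hα'pos : 0 < α') (hα' : (1 + α) * α' < 1)
    (hγsum1 : ∀ m : ℕ, 1 ≤ m →
      |(∑ k ∈ Finset.range m, γ (k : ℤ)) - γbar * (m : ℝ)| ≤ c * (m : ℝ) ^ α')
    (hγsum2 : ∀ m : ℕ, 1 ≤ m →
      |(∑ k ∈ Finset.range m, γ (-(k : ℤ) - 1)) - γbar * (m : ℝ)| ≤ c * (m : ℝ) ^ α') :
    ∃ S : ℂ → ℂ,
      (∀ z : ℂ, (∀ x ∈ L, z ≠ (x : ℂ)) →
        Tendsto
          (fun ℓ : ℝ => ∑' x : ↥(L ∩ Set.Icc (-ℓ) ℓ),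
            ((weightFun L x0 γ (x : ℝ) : ℝ) : ℂ) / (((x : ℝ) : ℂ) - z))
          atTop (𝓝 (S z)))
      ∧ DifferentiableOn ℂ S {z : ℂ | ∀ x ∈ L, z ≠ (x : ℂ)}
      ∧ ∀ x ∈ L, ∃ ε > (0 : ℝ), ∃ F : ℂ → ℂ,
          DifferentiableOn ℂ F (Metric.ball (x : ℂ) ε) ∧
          ∃ r : ℂ, r ≠ 0 ∧ ∀ z ∈ Metric.ball (x : ℂ) ε, z ≠ (x : ℂ) →
            S z = F z + r / ((x : ℂ) - z) := by
  have hfin := finite_abs_le_subtype hLfin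
  have hw : ∀ x, 0 < weightFun L x0 γ x := fun x => hγpos _
  obtain ⟨hα0, hα1⟩ := hα
  have hα'0 : 0 < (1 + α) * α' := by positivity
  obtain ⟨C, hC⟩ := exists_weightFun_sum_bounds hLfin (by linarith) (hτpos 1 le_rfl).le
    (hτ 1 le_rfl) hx0 hγbar.le hc.le hα'pos hα'.le hγsum1 hγsum2
  have hmap : ∀ (t : ℝ) (x : ℝ), x ∈ (hfin t).toFinset.map (Function.Embedding.subtype _) ↔
      x ∈ L ∩ Set.Icc (-t) t := by
    intro t x
    simp [abs_le]
    tauto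
  have hlocal : ∀ R, |x0| + 1 ≤ R → ∃ G : ℂ → ℂ, DifferentiableOn ℂ G (Metric.ball 0 (R / 2)) ∧
      ∀ z ∈ Metric.ball (0 : ℂ) (R / 2),
        Tendsto (fun r => ∑ i ∈ (hfin r).toFinset,
            (weightFun L x0 γ i : ℂ) / (((i : ℝ) : ℂ) - z)) atTop
          (𝓝 (∑ i ∈ (hfin R).toFinset,
            (weightFun L x0 γ i : ℂ) / (((i : ℝ) : ℂ) - z) + G z)) := by
    intro R hR
    have hR1 : 1 ≤ R := by linarith [abs_nonneg x0]
    obtain ⟨l₁, hl₁⟩ := exists_tendsto_sum_mul_rpow_neg (fun i : L => |(i : ℝ)|) hfin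
      (fun i => if x0 < i then weightFun L x0 γ i - γbar else -(weightFun L x0 γ i - γbar))
      one_pos hα'0.le hα' hR1 (C := C) (fun t ht => by
        have := (hC t (by linarith) (by linarith) _ (hmap t)).1
        rw [Finset.sum_map] at this
        exact this)
    obtain ⟨l₂, hl₂⟩ := exists_tendsto_sum_mul_rpow_neg (fun i : L => |(i : ℝ)|) hfin
      (fun i => weightFun L x0 γ i) two_pos (show 0 ≤ 1 + α by linarith) (by linarith) hR1 (C := C)
      (fun t ht => by
        have := (hC t (by linarith) (by linarith) _ (hmap t)).2
        rw [Finset.sum_map] at this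
        exact this)
    obtain ⟨h, hh⟩ := hH R hR1
    have hh' := tendsto_sum_closed_window hfin (f := fun x => 1 / x) hh
    refine exists_differentiableOn_tendsto_stieltjes hfin (fun x => (hw x).le)
      (H := l₁ + γbar * h) (by linarith) ?_ ?_
    · refine (hl₁.add (hh'.const_mul γbar)).congr fun r => ?_
      rw [Finset.mul_sum, ← Finset.sum_add_distrib]
      apply Finset.sum_congr rfl
      intro i hi
      have hi' : R < |(i : ℝ)| := (Finset.mem_filter.mp hi).2
      obtain ⟨hx1, hx2⟩ := abs_lt.mp (show |x0| < R by linarith)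
      rw [Real.rpow_neg_one]
      rcases lt_abs.mp hi' with hpos | hneg
      · rw [if_pos (by linarith), abs_of_pos (by linarith)]
        ring
      · rw [if_neg (by linarith), abs_of_neg (by linarith), inv_neg]
        ring
    · refine summable_of_sum_le (c := l₂) ?_ ?_
      · intro i
        have := (hw i).le
        simp only [Pi.zero_apply]
        split_ifs <;> positivity
      · intro u
        refine ge_of_tendsto hl₂ ?_
        obtain ⟨M, hM⟩ := (u.image fun i : L => |(i : ℝ)|).bddAbove
        filter_upwards [eventually_ge_atTop M] with r hr
        rw [← Finset.sum_filter]
        refine le_trans (Finset.sum_le_sum_of_subset_of_nonneg (t := (hfin r).toFinset.filter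
          (fun i : L => R < |(i : ℝ)|)) ?_ ?_) (le_of_eq ?_)
        · intro i hi
          simp only [Finset.mem_filter, Finite.mem_toFinset, mem_ofPred_eq] at hi ⊢
          exact ⟨(hM (by simpa using ⟨i, ⟨i.2, hi.1⟩, rfl⟩)).trans hr, hi.2⟩
        · intro i _ _
          have := (hw i).le
          positivity
        · apply Finset.sum_congr rfl
          intro i _
          rw [Real.rpow_neg (abs_nonneg _), Real.rpow_two, sq_abs, div_eq_mul_inv]
  have htsum : ∀ (z : ℂ) (r : ℝ), ∑' x : ↥(L ∩ Set.Icc (-r) r),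
      ((weightFun L x0 γ (x : ℝ) : ℝ) : ℂ) / (((x : ℝ) : ℂ) - z)
      = ∑ i ∈ (hfin r).toFinset, (weightFun L x0 γ i : ℂ) / (((i : ℝ) : ℂ) - z) := by
    intro z r
    refine tsum_subtype_eq_sum _ (fun x => ?_)
      (fun x => ((weightFun L x0 γ x : ℝ) : ℂ) / ((x : ℂ) - z))
    simp [abs_le]
    tauto
  choose! G hGdiff hGlim using hlocal
  have hlim : ∀ z : ℂ, ∃ s, Tendsto (fun r => ∑ i ∈ (hfin r).toFinset,
      (weightFun L x0 γ i : ℂ) / (((i : ℝ) : ℂ) - z)) atTop (𝓝 s) := by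
    intro z
    refine ⟨_, hGlim (|x0| + 1 + 2 * ‖z‖) (by linarith [norm_nonneg z]) z ?_⟩
    rw [mem_ball_zero_iff]
    linarith [abs_nonneg x0]
  choose S hS using hlim
  have hSeq : ∀ R, |x0| + 1 ≤ R → ∀ z ∈ Metric.ball (0 : ℂ) (R / 2), S z =
      ∑ i ∈ (hfin R).toFinset, (weightFun L x0 γ i : ℂ) / (((i : ℝ) : ℂ) - z) + G R z :=
    fun R hR z hz => tendsto_nhds_unique (hS z) (hGlim R hR z hz)
  refine ⟨S, fun z _ => ?_, ?_, ?_⟩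
  · simp only [htsum]
    exact hS z
  · intro z hz
    set R := |x0| + 1 + 2 * ‖z‖ with hRdef
    have hR : |x0| + 1 ≤ R := by linarith [norm_nonneg z]
    have hzR : z ∈ Metric.ball (0 : ℂ) (R / 2) := by
      rw [mem_ball_zero_iff]
      linarith [abs_nonneg x0]
    have hnhds := Metric.isOpen_ball.mem_nhds hzR
    refine DifferentiableAt.differentiableWithinAt ?_
    refine DifferentiableAt.congr_of_eventuallyEq ?_
      (Filter.eventually_of_mem hnhds (hSeq R hR))
    refine DifferentiableAt.add (DifferentiableAt.fun_sum fun i _ => ?_)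
      ((hGdiff R hR).differentiableAt hnhds)
    exact DifferentiableAt.div (by fun_prop) (by fun_prop) (sub_ne_zero.mpr (hz i i.2).symm)
  · intro x hx
    set R := |x0| + 1 + 2 * |x| with hRdef
    have hR : |x0| + 1 ≤ R := by linarith [abs_nonneg x]
    have hxR : (x : ℂ) ∈ Metric.ball (0 : ℂ) (R / 2) := by
      rw [mem_ball_zero_iff, Complex.norm_real, Real.norm_eq_abs]
      linarith [abs_nonneg x0]
    set Q := (hfin R).toFinset.erase ⟨x, hx⟩ with hQ
    have hcl : IsClosed ((fun i : L => ((i : ℝ) : ℂ)) '' ↑Q) :=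
      (Q.finite_toSet.image _).isClosed
    have hxQ : (x : ℂ) ∉ (fun i : L => ((i : ℝ) : ℂ)) '' ↑Q := by
      rintro ⟨i, hi, hix⟩
      refine (Finset.mem_erase.mp hi).1 (Subtype.ext ?_)
      exact Complex.ofReal_injective hix
    obtain ⟨ε, hε, hball⟩ := Metric.isOpen_iff.mp (Metric.isOpen_ball.inter hcl.isOpen_compl)
      (x : ℂ) ⟨hxR, hxQ⟩
    refine ⟨ε, hε, fun z => ∑ i ∈ Q, (weightFun L x0 γ i : ℂ) / (((i : ℝ) : ℂ) - z) + G R z,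
      ?_, weightFun L x0 γ x, by exact_mod_cast (hw x).ne', ?_⟩
    · refine DifferentiableOn.add (DifferentiableOn.fun_sum fun i hi => ?_)
        ((hGdiff R hR).mono fun z hz => (hball hz).1)
      refine DifferentiableOn.div (by fun_prop) (by fun_prop) fun z hz => ?_
      exact sub_ne_zero.mpr fun h => (hball hz).2 ⟨i, hi, h⟩
    · intro z hz _
      have hmem : (⟨x, hx⟩ : L) ∈ (hfin R).toFinset := by
        simp only [Finite.mem_toFinset, mem_ofPred_eq]
        linarith [abs_nonneg x0, abs_nonneg x]
      rw [hSeq R hR z (hball hz).1, ← Finset.sum_erase_add _ _ hmem]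
      ring
end

section
/- Let (Ξ_n)_{n≥1} be simple point measures on ℝ with supports L_n, converging locally weakly to a simple point measure Ξ with support L. Fix α ∈ (0,1) and reals τ_ℓ > 0 with τ_ℓ → 0 as ℓ → ∞, such that ∫_ℝ 1(|λ| > ℓ)/|λ|^{1+α} dΞ_n(λ) ≤ τ_ℓ for all n, ℓ ≥ 1. Assume the limits h_{n,ℓ} = lim_{ℓ'→∞} ∫_ℝ 1(ℓ < |λ| < ℓ')/λ dΞ_n(λ) exist, as does the analogous limit h_ℓ for Ξ, and that for some h ∈ ℝ, lim_{ℓ→∞} lim_{n→∞} h_{n,ℓ} = h and lim_{ℓ→∞} h_ℓ = 0, the limits in ℓ being restricted to ℓ with ℓ ∉ L and −ℓ ∉ L. Let (γ_{n,k})_{k∈ℤ} be strictly positive with γ_{n,k} → γ_k > 0 as n → ∞ for each k, and suppose for some γ̄, c > 0 and some α' with 0 < (1+α)α' < 1, for all n, m ≥ 1: |Σ_{k=0}^{m−1} γ_{n,k} − γ̄m| ≤ c m^{α'} and |Σ_{k=−m}^{−1} γ_{n,k} − γ̄m| ≤ c m^{α'}. Let λ* ∈ ℝ∖L and let Λ (resp.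 Λ_n, for n large enough so that λ* ∉ L_n) be the weighted version of Ξ (resp. Ξ_n) where the k-th point after λ* (for k ≤ 0, the (1−k)-th point before λ*) has weight γ_k (resp. γ_{n,k}). Then the meromorphic functions S_n, defined by S_n(z) = lim_{ℓ→∞} ∫_{[−ℓ,ℓ]} 1/(λ−z) dΛ_n(λ) for z ∉ L_n, converge as n → ∞ to S + γ̄h, uniformly on compact subsets of ℂ with respect to the chordal distance d on the Riemann sphere, where S is the meromorphic function with S(z) = lim_{ℓ→∞} ∫_{[−ℓ,ℓ]} 1/(λ−z) dΛ(λ) for z ∉ L. -/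
open Filter Set Topology BigOperators

attribute [local instance] Classical.propDecidable

/-- The chordal (spherical) distance on the Riemann sphere `ℂ ∪ {∞}`,
modelled as `Option ℂ` with `none` representing the point `∞`. -/
noncomputable def chordal : Option ℂ → Option ℂ → ℝ
  | none, none => 0
  | none, some b => 1 / Real.sqrt (1 + ‖b‖ ^ 2)
  | some a, none => 1 / Real.sqrt (1 + ‖a‖ ^ 2)
  | some a, some b => ‖b - a‖ / Real.sqrt ((1 + ‖a‖ ^ 2) * (1 + ‖b‖ ^ 2))

/-- Abel summation bound: a sum of increments of `g` against weights whose partial sums are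
bounded by `B` is controlled by the variation of a potential `Φ`. -/
theorem norm_sum_mul_sub_le {u : ℝ → ℝ} {g : ℝ → ℂ} {B Φ : ℝ → ℝ} {a : ℝ}
    (hB : ∀ s, a ≤ s → 0 ≤ B s)
    (hΦ : ∀ s t, a ≤ s → s ≤ t → B s * ‖g s - g t‖ ≤ Φ s - Φ t) (P : Finset ℝ) :
    (∀ x ∈ P, a ≤ x) → (∀ m ∈ P, |∑ x ∈ P with x ≤ m, u x| ≤ B m) →
      ∀ b, a ≤ b → (∀ x ∈ P, x ≤ b) →
        ‖∑ x ∈ P, (u x : ℂ) * (g x - g b)‖ ≤ Φ a - Φ b := by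
  induction P using Finset.induction_on_max with
  | empty =>
    intro _ _ b hb _
    simpa using le_trans (mul_nonneg (hB a le_rfl) (norm_nonneg _)) (hΦ a b le_rfl hb)
  | insert m P hm ih =>
    intro ha hU b hb hPb
    have hmP : m ∉ P := fun h => lt_irrefl _ (hm m h)
    have ham : a ≤ m := ha m (Finset.mem_insert_self _ _)
    have hmb : m ≤ b := hPb m (Finset.mem_insert_self _ _)
    have h1 := ih (fun x hx => ha x (Finset.mem_insert_of_mem hx)) (fun y hy => by
      have := hU y (Finset.mem_insert_of_mem hy)
      rwa [Finset.filter_insert, if_neg (not_le.2 (hm y hy))] at this) m ham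
      (fun x hx => (hm x hx).le)
    have h2 := hU m (Finset.mem_insert_self _ _)
    rw [Finset.filter_true_of_mem] at h2
    swap
    · intro x hx
      rcases Finset.mem_insert.1 hx with rfl | hx
      · exact le_rfl
      · exact (hm x hx).le
    have key : ∑ x ∈ insert m P, (u x : ℂ) * (g x - g b)
        = ∑ x ∈ P, (u x : ℂ) * (g x - g m)
          + ((∑ x ∈ insert m P, u x : ℝ) : ℂ) * (g m - g b) := by
      rw [Finset.sum_insert hmP, Finset.sum_insert hmP]
      push_cast
      rw [add_mul, Finset.sum_mul, add_left_comm, ← Finset.sum_add_distrib]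
      congr 1
      exact Finset.sum_congr rfl fun x _ => by ring
    rw [key]
    calc _ ≤ Φ a - Φ m + B m * ‖g m - g b‖ := by
          refine (norm_add_le _ _).trans (add_le_add h1 ?_)
          rw [norm_mul, Complex.norm_real]
          exact mul_le_mul_of_nonneg_right h2 (norm_nonneg _)
      _ ≤ _ := by linarith [hΦ m b ham hmb]

/-- Summing a sequence along the ranks of the points of a finite set. -/
theorem sum_rank_eq_sum_range (f : ℕ → ℝ) (P : Finset ℝ) :
    ∑ x ∈ P, f (Finset.card {y ∈ P | y ≤ x}) = ∑ k ∈ Finset.range P.card, f (k + 1) := by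
  induction P using Finset.induction_on_max with
  | empty => simp
  | insert m P hm ih =>
    have hmP : m ∉ P := fun h => lt_irrefl _ (hm m h)
    rw [Finset.sum_insert hmP, Finset.card_insert_of_notMem hmP, Finset.sum_range_succ, ← ih,
      add_comm]
    congr 1
    · refine Finset.sum_congr rfl fun x hx => ?_
      rw [Finset.filter_insert, if_neg (not_le.2 (hm x hx))]
    · rw [Finset.filter_true_of_mem, Finset.card_insert_of_notMem hmP]
      intro x hx
      rcases Finset.mem_insert.1 hx with rfl | hx
      · exact le_rfl
      · exact (hm x hx).le

theorem rpow_mul_inv_sub_inv_le {β s t : ℝ} (hβ0 : 0 ≤ β) (hβ : β < 1) (hs : 0 < s)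
    (hst : s ≤ t) :
    s ^ β * (1 / s - 1 / t) ≤ (s ^ (β - 1) - t ^ (β - 1)) / (1 - β) := by
  have ht : 0 < t := hs.trans_le hst
  have hb : (s / t) ^ (1 - β) ≤ 1 + (1 - β) * (s / t - 1) := by
    have h := rpow_one_add_le_one_add_mul_self (s := s / t - 1) (p := 1 - β)
      (by linarith [div_pos hs ht]) (by linarith) (by linarith)
    simpa using h
  have e1 : s ^ β * (1 / s - 1 / t) = s ^ (β - 1) * (1 - s / t) := by
    rw [Real.rpow_sub_one hs.ne']
    field_simp
  have e2 : t ^ (β - 1) = s ^ (β - 1) * (s / t) ^ (1 - β) := by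
    rw [Real.div_rpow hs.le ht.le, show β - 1 = -(1 - β) by ring, Real.rpow_neg hs.le,
      Real.rpow_neg ht.le]
    have := (Real.rpow_pos_of_pos hs (1 - β)).ne'
    field_simp
  rw [le_div_iff₀ (by linarith), e1, e2]
  have hp := (Real.rpow_pos_of_pos hs (β - 1)).le
  nlinarith [mul_le_mul_of_nonneg_left hb hp]

/-- The points of a locally finite set lying in `[-r, r]`. -/
noncomputable def window {L : Set ℝ} (hL : ∀ a b : ℝ, (L ∩ Set.Icc a b).Finite) (r : ℝ) :
    Finset ℝ :=
  (hL (-r) r).toFinset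

theorem mem_window {L : Set ℝ} {hL : ∀ a b : ℝ, (L ∩ Set.Icc a b).Finite} {r x : ℝ} :
    x ∈ window hL r ↔ x ∈ L ∧ -r ≤ x ∧ x ≤ r := by
  simp [window]

theorem sum_weightFun_window {L : Set ℝ} (hL : ∀ a b : ℝ, (L ∩ Set.Icc a b).Finite) {x0 x : ℝ}
    (hx : |x0| ≤ x) (γ : ℤ → ℝ) :
    ∑ y ∈ window hL x with x0 < y, weightFun L x0 γ y
      = ∑ k ∈ Finset.range (Finset.card {y ∈ window hL x | x0 < y}), γ ((k : ℤ) + 1) := by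
  have h := sum_rank_eq_sum_range (fun k => γ (k : ℤ)) {y ∈ window hL x | x0 < y}
  push_cast at h
  rw [← h]
  refine Finset.sum_congr rfl fun y hy => ?_
  obtain ⟨hy, hxy⟩ := Finset.mem_filter.1 hy
  rw [mem_window] at hy
  have hs : L ∩ Set.Ioc x0 y
      = ((Finset.filter (fun t => t ≤ y) {y ∈ window hL x | x0 < y} : Finset ℝ) : Set ℝ) := by
    ext t
    simp only [Finset.coe_filter, Finset.mem_filter, mem_window, Set.mem_inter_iff, Set.mem_Ioc,
      Set.mem_ofPred_eq]
    have := abs_le.1 hx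
    constructor
    · rintro ⟨h1, h2, h3⟩
      exact ⟨⟨⟨h1, by linarith, by linarith⟩, h2⟩, h3⟩
    · rintro ⟨⟨⟨h1, -, -⟩, h2⟩, h3⟩
      exact ⟨h1, h2, h3⟩
  rw [weightFun, if_pos hxy, hs, Nat.card_coe_set_eq, Set.ncard_coe_finset]

theorem abs_sum_weightFun_sub_le {L : Set ℝ} (hL : ∀ a b : ℝ, (L ∩ Set.Icc a b).Finite)
    {γ : ℤ → ℝ} {γbar C α' κ A x0 x : ℝ} (hC : 0 ≤ C) (hα' : 0 < α')
    (hγ : ∀ m : ℕ, |∑ k ∈ Finset.range m, γ ((k : ℤ) + 1) - γbar * m| ≤ C * (m : ℝ) ^ α')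
    (hx1 : 1 ≤ x) (hx : |x0| ≤ x) (hA : 0 ≤ A) (hN : ((window hL x).card : ℝ) ≤ A * x ^ κ) :
    |∑ y ∈ window hL x with x0 < y, (weightFun L x0 γ y - γbar)|
      ≤ C * A ^ α' * x ^ (κ * α') := by
  have hx0 : 0 ≤ x := by linarith
  rw [Finset.sum_sub_distrib, sum_weightFun_window hL hx, Finset.sum_const, nsmul_eq_mul,
    mul_comm _ γbar]
  refine (hγ _).trans ?_
  rw [mul_assoc, Real.rpow_mul hx0, ← Real.mul_rpow hA (Real.rpow_nonneg hx0 _)]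
  refine mul_le_mul_of_nonneg_left (Real.rpow_le_rpow (Nat.cast_nonneg _) ?_ hα'.le) hC
  exact le_trans (Nat.cast_le.2 (Finset.card_filter_le _ _)) hN

theorem norm_ofReal_sub_ge {x : ℝ} {z : ℂ} (h : 2 * ‖z‖ ≤ |x|) : |x| / 2 ≤ ‖(x : ℂ) - z‖ := by
  have := norm_sub_norm_le (x : ℂ) z
  rw [Complex.norm_real, Real.norm_eq_abs] at this
  linarith

theorem norm_resolvent_sub_le {s t : ℝ} {z : ℂ} (hs : 0 < s) (hst : s ≤ t) (hz : 2 * ‖z‖ ≤ s) :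
    ‖1 / ((s : ℂ) - z) - 1 / ((t : ℂ) - z)‖ ≤ 4 * (1 / s - 1 / t) := by
  have ht : 0 < t := hs.trans_le hst
  have h1 : s / 2 ≤ ‖(s : ℂ) - z‖ := by
    have := norm_ofReal_sub_ge (x := s) (z := z) (by rwa [abs_of_pos hs])
    rwa [abs_of_pos hs] at this
  have h2 : t / 2 ≤ ‖(t : ℂ) - z‖ := by
    have := norm_ofReal_sub_ge (x := t) (z := z) (by rw [abs_of_pos ht]; linarith)
    rwa [abs_of_pos ht] at this
  have n1 : (s : ℂ) - z ≠ 0 := norm_pos_iff.1 (by linarith)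
  have n2 : (t : ℂ) - z ≠ 0 := norm_pos_iff.1 (by linarith)
  have e : 1 / ((s : ℂ) - z) - 1 / ((t : ℂ) - z)
      = ((t - s : ℝ) : ℂ) / (((s : ℂ) - z) * ((t : ℂ) - z)) := by
    field_simp
    push_cast
    ring
  rw [e, norm_div, norm_mul, Complex.norm_real, Real.norm_eq_abs, abs_of_nonneg (by linarith)]
  calc (t - s) / (‖(s : ℂ) - z‖ * ‖(t : ℂ) - z‖) ≤ (t - s) / (s / 2 * (t / 2)) := by
        gcongr
    _ = _ := by
        field_simp
        ring

/-- Tail bound, on the positive side, for the fluctuation of the weights around their mean. -/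
theorem norm_sum_right_tail_le {L : Set ℝ} (hL : ∀ a b : ℝ, (L ∩ Set.Icc a b).Finite)
    {γ : ℤ → ℝ} {γbar C α' κ A x0 ℓ r : ℝ} {z : ℂ} (hC : 0 ≤ C) (hα' : 0 < α') (hκ : 0 ≤ κ)
    (hκα' : κ * α' < 1)
    (hγ : ∀ m : ℕ, |∑ k ∈ Finset.range m, γ ((k : ℤ) + 1) - γbar * m| ≤ C * (m : ℝ) ^ α')
    (hℓ1 : 1 ≤ ℓ) (hℓ : |x0| ≤ ℓ) (hA : 0 ≤ A)
    (hN : ∀ x, ℓ ≤ x → ((window hL x).card : ℝ) ≤ A * x ^ κ)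
    (hz : 2 * ‖z‖ ≤ ℓ) (hr : ℓ ≤ r) :
    ‖∑ y ∈ window hL r with ℓ < y, ((weightFun L x0 γ y - γbar : ℝ) : ℂ) / ((y : ℂ) - z)‖
      ≤ 2 * (C * A ^ α') * (4 / (1 - κ * α') + 2) * ℓ ^ (κ * α' - 1) := by
  set u : ℝ → ℝ := fun y => weightFun L x0 γ y - γbar with hu
  set g : ℝ → ℂ := fun y => 1 / ((y : ℂ) - z) with hg
  set D : ℝ := 2 * (C * A ^ α') with hD
  set β : ℝ := κ * α' with hβ
  have hβ0 : 0 ≤ β := mul_nonneg hκ hα'.le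
  have hD0 : 0 ≤ D := by positivity
  set Q : ℝ → Finset ℝ := fun x => {y ∈ window hL x | x0 < y} with hQ
  have hE : ∀ x, ℓ ≤ x → |∑ y ∈ Q x, u y| ≤ C * A ^ α' * x ^ β := fun x hx =>
    abs_sum_weightFun_sub_le hL hC hα' hγ (hℓ1.trans hx) (hℓ.trans hx) hA (hN x hx)
  have hx0 := abs_le.1 hℓ
  have hU : ∀ m, ℓ ≤ m → m ≤ r →
      |∑ y ∈ Finset.filter (fun y => y ≤ m) {y ∈ window hL r | ℓ < y}, u y| ≤ D * m ^ β := by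
    intro m hm hmr
    have hsplit := Finset.sum_filter_add_sum_filter_not (Q m) (fun y => y ≤ ℓ) u
    have e1 : Finset.filter (fun y => y ≤ ℓ) (Q m) = Q ℓ := by
      ext y
      simp only [hQ, Finset.mem_filter, mem_window]
      constructor
      · rintro ⟨⟨⟨h1, h2, h3⟩, h4⟩, h5⟩
        exact ⟨⟨h1, by linarith, h5⟩, h4⟩
      · rintro ⟨⟨h1, h2, h3⟩, h4⟩
        exact ⟨⟨⟨h1, by linarith, by linarith⟩, h4⟩, h3⟩
    have e2 : Finset.filter (fun y => ¬ y ≤ ℓ) (Q m)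
        = Finset.filter (fun y => y ≤ m) {y ∈ window hL r | ℓ < y} := by
      ext y
      simp only [hQ, Finset.mem_filter, mem_window, not_le]
      constructor
      · rintro ⟨⟨⟨h1, h2, h3⟩, h4⟩, h5⟩
        exact ⟨⟨⟨h1, by linarith, by linarith⟩, h5⟩, h3⟩
      · rintro ⟨⟨⟨h1, h2, h3⟩, h4⟩, h5⟩
        exact ⟨⟨⟨h1, by linarith, h5⟩, by linarith⟩, h4⟩
    rw [e1, e2] at hsplit
    have h1 := hE m hm
    have h2 := hE ℓ le_rfl
    have h3 : C * A ^ α' * ℓ ^ β ≤ C * A ^ α' * m ^ β := by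
      gcongr
    rw [eq_sub_of_add_eq' hsplit]
    refine (abs_sub _ _).trans ?_
    rw [hD]
    linarith
  have hmain := norm_sum_mul_sub_le (u := u) (g := g) (B := fun s => D * s ^ β)
    (Φ := fun s => D * 4 * (s ^ (β - 1) / (1 - β))) (a := ℓ)
    (fun s hs => mul_nonneg hD0 (Real.rpow_nonneg (by linarith) _))
    (fun s t hs hst => by
      have hs0 : 0 < s := by linarith
      have h1 := norm_resolvent_sub_le (z := z) hs0 hst (hz.trans hs)
      have h2 := rpow_mul_inv_sub_inv_le hβ0 hκα' hs0 hst
      calc D * s ^ β * ‖g s - g t‖ ≤ D * s ^ β * (4 * (1 / s - 1 / t)) :=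
            mul_le_mul_of_nonneg_left h1 (mul_nonneg hD0 (Real.rpow_nonneg hs0.le _))
        _ = D * 4 * (s ^ β * (1 / s - 1 / t)) := by ring
        _ ≤ D * 4 * ((s ^ (β - 1) - t ^ (β - 1)) / (1 - β)) :=
            mul_le_mul_of_nonneg_left h2 (by positivity)
        _ = _ := by ring)
    {y ∈ window hL r | ℓ < y} (fun x hx => (Finset.mem_filter.1 hx).2.le)
    (fun m hm => by
      rw [Finset.mem_filter, mem_window] at hm
      exact hU m hm.2.le hm.1.2.2) r hr
    (fun x hx => by
      rw [Finset.mem_filter, mem_window] at hx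
      exact hx.1.2.2)
  have hUr := hU r hr le_rfl
  rw [Finset.filter_true_of_mem (fun x hx => by
      rw [Finset.mem_filter, mem_window] at hx
      exact hx.1.2.2)] at hUr
  have hr0 : 0 < r := by linarith
  have hgr : ‖g r‖ ≤ 2 / r := by
    have h2 : r / 2 ≤ ‖(r : ℂ) - z‖ := by
      have := norm_ofReal_sub_ge (x := r) (z := z) (by rw [abs_of_pos hr0]; linarith)
      rwa [abs_of_pos hr0] at this
    rw [hg]
    simp only [norm_div, norm_one]
    rw [div_le_div_iff₀ (by linarith) hr0]
    linarith
  have key : ∑ y ∈ window hL r with ℓ < y, ((u y : ℝ) : ℂ) / ((y : ℂ) - z)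
      = ∑ y ∈ window hL r with ℓ < y, (u y : ℂ) * (g y - g r)
        + ((∑ y ∈ window hL r with ℓ < y, u y : ℝ) : ℂ) * g r := by
    push_cast
    rw [Finset.sum_mul, ← Finset.sum_add_distrib]
    exact Finset.sum_congr rfl fun y _ => by simp only [hg]; ring
  change ‖∑ y ∈ window hL r with ℓ < y, ((u y : ℝ) : ℂ) / ((y : ℂ) - z)‖ ≤ _
  rw [key]
  have hpow : r ^ (β - 1) ≤ ℓ ^ (β - 1) :=
    Real.rpow_le_rpow_of_nonpos (by linarith) hr (by linarith)
  have hrn : 0 ≤ D * 4 * (r ^ (β - 1) / (1 - β)) :=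
    mul_nonneg (by positivity) (div_nonneg (Real.rpow_nonneg hr0.le _) (by linarith))
  have hlast : |∑ y ∈ window hL r with ℓ < y, u y| * ‖g r‖ ≤ D * 2 * ℓ ^ (β - 1) :=
    calc _ ≤ D * r ^ β * (2 / r) :=
          mul_le_mul hUr hgr (norm_nonneg _) (mul_nonneg hD0 (Real.rpow_nonneg hr0.le _))
      _ = D * 2 * r ^ (β - 1) := by rw [Real.rpow_sub_one hr0.ne']; ring
      _ ≤ _ := mul_le_mul_of_nonneg_left hpow (by positivity)
  calc _ ≤ (D * 4 * (ℓ ^ (β - 1) / (1 - β)) - D * 4 * (r ^ (β - 1) / (1 - β)))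
        + D * 2 * ℓ ^ (β - 1) := by
        refine (norm_add_le _ _).trans (add_le_add hmain ?_)
        rwa [norm_mul, Complex.norm_real]
    _ ≤ D * 4 * (ℓ ^ (β - 1) / (1 - β)) + D * 2 * ℓ ^ (β - 1) := by linarith
    _ = _ := by ring

theorem finite_neg_inter_Icc {L : Set ℝ} (hL : ∀ a b : ℝ, (L ∩ Set.Icc a b).Finite) (a b : ℝ) :
    ((-L) ∩ Set.Icc a b).Finite := by
  have h : (-L) ∩ Set.Icc a b = -(L ∩ Set.Icc (-b) (-a)) := by
    ext x
    simp only [Set.mem_inter_iff, Set.mem_neg, Set.mem_Icc]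
    constructor
    · rintro ⟨h1, h2, h3⟩
      exact ⟨h1, by linarith, by linarith⟩
    · rintro ⟨h1, h2, h3⟩
      exact ⟨h1, by linarith, by linarith⟩
  rw [h]
  exact (hL _ _).neg

theorem weightFun_neg {L : Set ℝ} {x0 x : ℝ} (hx : x ≠ x0) (γ : ℤ → ℝ) :
    weightFun (-L) (-x0) (fun k => γ (1 - k)) (-x) = weightFun L x0 γ x := by
  have hcard : ∀ s t : Set ℝ, s = -t → Nat.card ↥s = Nat.card ↥t := by
    rintro s t rfl
    exact Set.natCard_neg t
  rcases lt_or_gt_of_ne hx with h | h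
  · have e := hcard ((-L) ∩ Set.Ioc (-x0) (-x)) (L ∩ Set.Ico x x0) (by
      ext y
      simp only [Set.mem_inter_iff, Set.mem_neg, Set.mem_Ioc, Set.mem_Ico]
      constructor
      · rintro ⟨h1, h2, h3⟩
        exact ⟨h1, by linarith, by linarith⟩
      · rintro ⟨h1, h2, h3⟩
        exact ⟨h1, by linarith, by linarith⟩)
    simp only [weightFun]
    rw [if_pos (by linarith), if_neg (by linarith), e]
  · have e := hcard ((-L) ∩ Set.Ico (-x) (-x0)) (L ∩ Set.Ioc x0 x) (by
      ext y
      simp only [Set.mem_inter_iff, Set.mem_neg, Set.mem_Ioc, Set.mem_Ico]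
      constructor
      · rintro ⟨h1, h2, h3⟩
        exact ⟨h1, by linarith, by linarith⟩
      · rintro ⟨h1, h2, h3⟩
        exact ⟨h1, by linarith, by linarith⟩)
    simp only [weightFun]
    rw [if_neg (by linarith), if_pos (by linarith), e]
    congr 1
    ring

theorem window_neg {L : Set ℝ} (hL : ∀ a b : ℝ, (L ∩ Set.Icc a b).Finite) {r x : ℝ} :
    -x ∈ window (finite_neg_inter_Icc hL) r ↔ x ∈ window hL r := by
  simp only [mem_window, Set.mem_neg, neg_neg]
  constructor
  · rintro ⟨h1, h2, h3⟩
    exact ⟨h1, by linarith, by linarith⟩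
  · rintro ⟨h1, h2, h3⟩
    exact ⟨h1, by linarith, by linarith⟩

/-- Tail bound, on the negative side, for the fluctuation of the weights around their mean. -/
theorem norm_sum_left_tail_le {L : Set ℝ} (hL : ∀ a b : ℝ, (L ∩ Set.Icc a b).Finite)
    {γ : ℤ → ℝ} {γbar C α' κ A x0 ℓ r : ℝ} {z : ℂ} (hC : 0 ≤ C) (hα' : 0 < α') (hκ : 0 ≤ κ)
    (hκα' : κ * α' < 1)
    (hγ : ∀ m : ℕ, |∑ k ∈ Finset.range m, γ (-(k : ℤ)) - γbar * m| ≤ C * (m : ℝ) ^ α')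
    (hℓ1 : 1 ≤ ℓ) (hℓ : |x0| ≤ ℓ) (hA : 0 ≤ A)
    (hN : ∀ x, ℓ ≤ x → ((window hL x).card : ℝ) ≤ A * x ^ κ)
    (hz : 2 * ‖z‖ ≤ ℓ) (hr : ℓ ≤ r) :
    ‖∑ y ∈ window hL r with y < -ℓ, ((weightFun L x0 γ y - γbar : ℝ) : ℂ) / ((y : ℂ) - z)‖
      ≤ 2 * (C * A ^ α') * (4 / (1 - κ * α') + 2) * ℓ ^ (κ * α' - 1) := by
  have h := norm_sum_right_tail_le (finite_neg_inter_Icc hL) (γ := fun k => γ (1 - k))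
    (γbar := γbar) (x0 := -x0) (z := -z) hC hα' hκ hκα'
    (fun m => by
      convert hγ m using 6
      ring) hℓ1 (by rwa [abs_neg]) hA
    (fun x hx => by
      convert hN x hx using 2
      exact (Finset.card_bij (fun y _ => -y) (fun y hy => (window_neg hL).2 hy)
        (fun a _ b _ hab => neg_injective hab)
        (fun y hy => ⟨-y, (window_neg hL).1 (by rwa [neg_neg]), neg_neg y⟩)).symm)
    (by rwa [norm_neg]) hr
  refine le_of_eq_of_le ?_ h
  rw [← norm_neg, ← Finset.sum_neg_distrib]
  congr 1
  refine Finset.sum_nbij' (fun y => -y) (fun y => -y) ?_ ?_ (fun y _ => neg_neg y)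
    (fun y _ => neg_neg y) ?_
  · intro y hy
    rw [Finset.mem_filter] at hy ⊢
    exact ⟨(window_neg hL).2 hy.1, by linarith [hy.2]⟩
  · intro y hy
    rw [Finset.mem_filter] at hy ⊢
    exact ⟨(window_neg hL).1 (by rw [neg_neg]; exact hy.1), by linarith [hy.2]⟩
  · intro y hy
    rw [Finset.mem_filter] at hy
    have hx0 := abs_le.1 hℓ
    rw [weightFun_neg (by linarith [hy.2] : y < x0).ne, ← div_neg]
    congr 1
    push_cast
    ring

theorem neBot_atTop_inf_avoiding {L : Set ℝ} (hL : ∀ a b : ℝ, (L ∩ Set.Icc a b).Finite) :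
    (atTop ⊓ 𝓟 {ℓ : ℝ | ℓ ∉ L ∧ -ℓ ∉ L}).NeBot := by
  rw [Filter.inf_principal_neBot_iff]
  intro U hU
  obtain ⟨a, ha⟩ := Filter.mem_atTop_sets.1 hU
  have hfin : (L ∩ Set.Icc a (a + 1) ∪ (-L) ∩ Set.Icc a (a + 1)).Finite :=
    (hL _ _).union (finite_neg_inter_Icc hL _ _)
  obtain ⟨x, hx, hx'⟩ := (Set.Icc_infinite (show a < a + 1 by linarith)).exists_notMem_finite hfin
  exact ⟨x, ha x hx.1, fun h => hx' (Or.inl ⟨h, hx⟩), fun h => hx' (Or.inr ⟨h, hx⟩)⟩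

theorem tsum_inter_Icc_eq_sum_window {E : Type*} [AddCommMonoid E] [TopologicalSpace E]
    {L : Set ℝ} (hL : ∀ a b : ℝ, (L ∩ Set.Icc a b).Finite) (r : ℝ) (f : ℝ → E) :
    ∑' x : ↥(L ∩ Set.Icc (-r) r), f x = ∑ x ∈ window hL r, f x := by
  rw [← Finset.tsum_subtype (window hL r) f]
  have h : L ∩ Set.Icc (-r) r = ((window hL r : Finset ℝ) : Set ℝ) := by simp [window]
  rw [h]
  rfl

theorem tsum_annulus_eq_sum_window {L : Set ℝ} (hL : ∀ a b : ℝ, (L ∩ Set.Icc a b).Finite)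
    {ℓ r : ℝ} (hr : r ∉ L) (hr' : -r ∉ L) (f : ℝ → ℝ) :
    ∑' x : ↥{t | t ∈ L ∧ ℓ < |t| ∧ |t| < r}, f x = ∑ x ∈ window hL r with ℓ < |x|, f x := by
  rw [← Finset.tsum_subtype {x ∈ window hL r | ℓ < |x|} f]
  have h : {t | t ∈ L ∧ ℓ < |t| ∧ |t| < r}
      = (({x ∈ window hL r | ℓ < |x|} : Finset ℝ) : Set ℝ) := by
    ext t
    simp only [Finset.coe_filter, mem_window, Set.mem_ofPred_eq]
    constructor
    · rintro ⟨h1, h2, h3⟩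
      have := abs_lt.1 h3
      exact ⟨⟨h1, by linarith, by linarith⟩, h2⟩
    · rintro ⟨⟨h1, h2, h3⟩, h4⟩
      refine ⟨h1, h4, lt_of_le_of_ne (abs_le.2 ⟨h2, h3⟩) fun h => ?_⟩
      rcases abs_choice t with h5 | h5
      · exact hr (by rw [← h, h5]; exact h1)
      · exact hr' (by rw [← h, h5, neg_neg]; exact h1)
  rw [h]
  rfl

/-- Error made when the Stieltjes transform is replaced by the sum over the points in `[-ℓ, ℓ]`
plus the mean weight times the tail of `∑ 1 / λ`. -/
theorem norm_stieltjes_sub_window_le {L : Set ℝ} (hL : ∀ a b : ℝ, (L ∩ Set.Icc a b).Finite)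
    {γ : ℤ → ℝ} {γbar C α' κ A x0 ℓ Hℓ T : ℝ} {z Sz : ℂ} (hC : 0 ≤ C) (hα' : 0 < α')
    (hκ : 0 ≤ κ) (hκ2 : κ ≤ 2) (hκα' : κ * α' < 1) (hγbar : 0 ≤ γbar)
    (hγ : ∀ m : ℕ, |∑ k ∈ Finset.range m, γ ((k : ℤ) + 1) - γbar * m| ≤ C * (m : ℝ) ^ α')
    (hγ' : ∀ m : ℕ, |∑ k ∈ Finset.range m, γ (-(k : ℤ)) - γbar * m| ≤ C * (m : ℝ) ^ α')
    (hℓ1 : 1 ≤ ℓ) (hℓ : |x0| ≤ ℓ) (hA : 0 ≤ A)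
    (hN : ∀ x, ℓ ≤ x → ((window hL x).card : ℝ) ≤ A * x ^ κ)
    (hz : 2 * ‖z‖ ≤ ℓ)
    (hS : Tendsto (fun r : ℝ => ∑' x : ↥(L ∩ Set.Icc (-r) r),
        ((weightFun L x0 γ (x : ℝ) : ℝ) : ℂ) / (((x : ℝ) : ℂ) - z)) atTop (𝓝 Sz))
    (hH : Tendsto (fun r : ℝ => ∑' x : ↥{t | t ∈ L ∧ ℓ < |t| ∧ |t| < r}, (1 / (x : ℝ)))
        atTop (𝓝 Hℓ))
    (hT : ∀ F : Finset ℝ, (∀ t ∈ F, t ∈ L ∧ ℓ < |t|) → ∑ t ∈ F, 1 / |t| ^ κ ≤ T) :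
    ‖Sz - ∑ x ∈ window hL ℓ, ((weightFun L x0 γ x : ℝ) : ℂ) / ((x : ℂ) - z)
        - ((γbar * Hℓ : ℝ) : ℂ)‖
      ≤ 2 * (2 * (C * A ^ α') * (4 / (1 - κ * α') + 2) * ℓ ^ (κ * α' - 1))
        + γbar * (2 * ‖z‖ * T) := by
  have := neBot_atTop_inf_avoiding hL
  have hS' := hS.mono_left (inf_le_left : atTop ⊓ 𝓟 {ℓ : ℝ | ℓ ∉ L ∧ -ℓ ∉ L} ≤ atTop)
  have hH' := hH.mono_left (inf_le_left : atTop ⊓ 𝓟 {ℓ : ℝ | ℓ ∉ L ∧ -ℓ ∉ L} ≤ atTop)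
  have hlim := ((hS'.sub_const
    (∑ x ∈ window hL ℓ, ((weightFun L x0 γ x : ℝ) : ℂ) / ((x : ℂ) - z))).sub
      ((Complex.continuous_ofReal.tendsto _).comp (hH'.const_mul γbar))).norm
  refine le_of_tendsto hlim ?_
  have hev : ∀ᶠ r in atTop ⊓ 𝓟 {ℓ : ℝ | ℓ ∉ L ∧ -ℓ ∉ L}, ℓ ≤ r :=
    (eventually_ge_atTop ℓ).filter_mono inf_le_left
  have hev' : ∀ᶠ r in atTop ⊓ 𝓟 {ℓ : ℝ | ℓ ∉ L ∧ -ℓ ∉ L}, r ∉ L ∧ -r ∉ L :=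
    Filter.Eventually.filter_mono inf_le_right (Filter.eventually_principal.2 fun _ h => h)
  filter_upwards [hev, hev'] with r hr hrL
  simp only [Function.comp_apply]
  rw [tsum_inter_Icc_eq_sum_window hL r
      (fun x => ((weightFun L x0 γ x : ℝ) : ℂ) / ((x : ℂ) - z)),
    tsum_annulus_eq_sum_window hL hrL.1 hrL.2 (fun x => 1 / x)]
  set w := weightFun L x0 γ with hw
  have hsplit := Finset.sum_filter_add_sum_filter_not (window hL r) (fun x => ℓ < |x|)
    (fun x => ((w x : ℝ) : ℂ) / ((x : ℂ) - z))
  have e1 : Finset.filter (fun x => ¬ ℓ < |x|) (window hL r) = window hL ℓ := by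
    ext x
    simp only [Finset.mem_filter, mem_window, not_lt, abs_le]
    constructor
    · rintro ⟨⟨h1, -, -⟩, h2⟩
      exact ⟨h1, h2⟩
    · rintro ⟨h1, h2, h3⟩
      exact ⟨⟨h1, by linarith, by linarith⟩, h2, h3⟩
  rw [e1] at hsplit
  have hsplit2 := Finset.sum_filter_add_sum_filter_not {x ∈ window hL r | ℓ < |x|}
    (fun x => ℓ < x) (fun x => ((w x - γbar : ℝ) : ℂ) / ((x : ℂ) - z))
  have e2 : Finset.filter (fun x => ℓ < x) {x ∈ window hL r | ℓ < |x|}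
      = {x ∈ window hL r | ℓ < x} := by
    ext x
    simp only [Finset.mem_filter]
    constructor
    · rintro ⟨⟨h1, -⟩, h2⟩
      exact ⟨h1, h2⟩
    · rintro ⟨h1, h2⟩
      exact ⟨⟨h1, h2.trans_le (le_abs_self x)⟩, h2⟩
  have e3 : Finset.filter (fun x => ¬ ℓ < x) {x ∈ window hL r | ℓ < |x|}
      = {x ∈ window hL r | x < -ℓ} := by
    ext x
    simp only [Finset.mem_filter, lt_abs]
    constructor
    · rintro ⟨⟨h1, h3⟩, h2⟩
      exact ⟨h1, by rcases h3 with h3 | h3 <;> linarith⟩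
    · rintro ⟨h1, h2⟩
      exact ⟨⟨h1, Or.inr (by linarith)⟩, by linarith⟩
  rw [e2, e3] at hsplit2
  have hR := norm_sum_right_tail_le hL (z := z) hC hα' hκ hκα' hγ hℓ1 hℓ hA hN hz hr
  have hLe := norm_sum_left_tail_le hL (z := z) hC hα' hκ hκα' hγ' hℓ1 hℓ hA hN hz hr
  have hres : ‖∑ x ∈ window hL r with ℓ < |x|, (1 / ((x : ℂ) - z) - 1 / (x : ℂ))‖
      ≤ 2 * ‖z‖ * T := by
    refine (norm_sum_le _ _).trans ?_
    refine le_trans ?_ (mul_le_mul_of_nonneg_left (hT {x ∈ window hL r | ℓ < |x|} ?_)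
      (by positivity : 0 ≤ 2 * ‖z‖))
    · rw [Finset.mul_sum]
      refine Finset.sum_le_sum fun x hx => ?_
      have hx := (Finset.mem_filter.1 hx).2
      have hx0 : 0 < |x| := by linarith
      have h1 : |x| / 2 ≤ ‖(x : ℂ) - z‖ := norm_ofReal_sub_ge (by linarith)
      have n1 : (x : ℂ) - z ≠ 0 := norm_pos_iff.1 (by linarith)
      have n2 : (x : ℂ) ≠ 0 := by
        rw [Ne, Complex.ofReal_eq_zero]
        exact abs_pos.1 hx0
      have e : 1 / ((x : ℂ) - z) - 1 / (x : ℂ) = z / (((x : ℂ) - z) * (x : ℂ)) := by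
        field_simp
        ring
      rw [e, norm_div, norm_mul, Complex.norm_real, Real.norm_eq_abs]
      have hpow : |x| ^ κ ≤ |x| * |x| := by
        rw [← sq, ← Real.rpow_two]
        exact Real.rpow_le_rpow_of_exponent_le (by linarith) hκ2
      have hpow0 : 0 < |x| ^ κ := Real.rpow_pos_of_pos hx0 _
      calc ‖z‖ / (‖(x : ℂ) - z‖ * |x|) ≤ ‖z‖ / (|x| / 2 * |x|) := by gcongr
        _ = 2 * ‖z‖ * (1 / (|x| * |x|)) := by field_simp
        _ ≤ _ := by gcongr
    · intro t ht
      rw [Finset.mem_filter, mem_window] at ht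
      exact ⟨ht.1.1, ht.2⟩
  have key : ∑ x ∈ window hL r, ((w x : ℝ) : ℂ) / ((x : ℂ) - z)
        - ∑ x ∈ window hL ℓ, ((w x : ℝ) : ℂ) / ((x : ℂ) - z)
        - ((γbar * ∑ x ∈ window hL r with ℓ < |x|, 1 / x : ℝ) : ℂ)
      = (∑ x ∈ window hL r with ℓ < x, ((w x - γbar : ℝ) : ℂ) / ((x : ℂ) - z)
        + ∑ x ∈ window hL r with x < -ℓ, ((w x - γbar : ℝ) : ℂ) / ((x : ℂ) - z))
        + (γbar : ℂ) * ∑ x ∈ window hL r with ℓ < |x|, (1 / ((x : ℂ) - z) - 1 / (x : ℂ)) := by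
    rw [hsplit2, ← hsplit, add_sub_cancel_right]
    push_cast
    rw [Finset.mul_sum, Finset.mul_sum, ← Finset.sum_sub_distrib, ← Finset.sum_add_distrib]
    exact Finset.sum_congr rfl fun x _ => by ring
  rw [key]
  calc _ ≤ (2 * (C * A ^ α') * (4 / (1 - κ * α') + 2) * ℓ ^ (κ * α' - 1)
        + 2 * (C * A ^ α') * (4 / (1 - κ * α') + 2) * ℓ ^ (κ * α' - 1))
        + γbar * (2 * ‖z‖ * T) := by
        refine (norm_add_le _ _).trans (add_le_add ((norm_add_le _ _).trans
          (add_le_add hR hLe)) ?_)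
        rw [norm_mul, Complex.norm_real, Real.norm_of_nonneg hγbar]
        exact mul_le_mul_of_nonneg_left hres hγbar
    _ = _ := by ring

theorem isClosed_of_finite_inter_Icc {L : Set ℝ} (hL : ∀ a b : ℝ, (L ∩ Set.Icc a b).Finite) :
    IsClosed L := by
  rw [← isOpen_compl_iff, isOpen_iff_forall_mem_open]
  intro x hx
  refine ⟨Set.Ioo (x - 1) (x + 1) ∩ (L ∩ Set.Icc (x - 1) (x + 1))ᶜ, ?_,
    isOpen_Ioo.inter (hL _ _).isClosed.isOpen_compl, ⟨by linarith, by linarith⟩, fun h => hx h.1⟩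
  rintro y ⟨hy, hy'⟩ hyL
  exact hy' ⟨hyL, hy.1.le, hy.2.le⟩

theorem summable_subtype_of_hasCompactSupport {L : Set ℝ}
    (hL : ∀ a b : ℝ, (L ∩ Set.Icc a b).Finite) {f : ℝ → ℝ} (hf : HasCompactSupport f) :
    Summable (fun x : ↥L => f x) := by
  obtain ⟨R, hR⟩ := hf.isCompact.isBounded.subset_closedBall 0
  refine summable_of_hasFiniteSupport ?_
  refine Set.Finite.of_finite_image (f := Subtype.val) ((hL (-R) R).subset ?_)
    Subtype.val_injective.injOn
  rintro _ ⟨x, hx, rfl⟩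
  have h := hR (subset_tsupport f hx)
  rw [Real.closedBall_eq_Icc] at h
  exact ⟨x.2, by simpa using h⟩

theorem sum_le_tsum_subtype {L : Set ℝ} (hL : ∀ a b : ℝ, (L ∩ Set.Icc a b).Finite) {f : ℝ → ℝ}
    (hf : HasCompactSupport f) (hf0 : ∀ x, 0 ≤ f x) {F : Finset ℝ} (hF : ∀ x ∈ F, x ∈ L) :
    ∑ x ∈ F, f x ≤ ∑' x : ↥L, f x := by
  have h := (summable_subtype_of_hasCompactSupport hL hf).sum_le_tsum (F.subtype (· ∈ L))
    (fun x _ => hf0 x)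
  rwa [Finset.sum_subtype_of_mem f hF] at h

section PointConvergence

variable {Ln : ℕ → Set ℝ} {L : Set ℝ}

theorem eventually_disjoint_of_isCompact
    (hLn : ∀ n, ∀ a b : ℝ, ((Ln n) ∩ Set.Icc a b).Finite)
    (hL : ∀ a b : ℝ, (L ∩ Set.Icc a b).Finite)
    (hweak : ∀ f : ℝ → ℝ, Continuous f → HasCompactSupport f →
      Tendsto (fun n => ∑' x : ↥(Ln n), f (x : ℝ)) atTop (𝓝 (∑' x : ↥L, f (x : ℝ))))
    {K : Set ℝ} (hK : IsCompact K) (hKL : Disjoint K L) :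
    ∀ᶠ n in atTop, Disjoint K (Ln n) := by
  obtain ⟨f, hf1, hf0, hfc, hf⟩ :=
    exists_continuous_one_zero_of_isCompact hK (isClosed_of_finite_inter_Icc hL) hKL
  have h := hweak f f.continuous hfc
  have h0 : ∑' x : ↥L, f (x : ℝ) = 0 := by
    rw [tsum_congr (fun x : ↥L => hf0 x.2)]
    simp
  rw [h0] at h
  filter_upwards [h.eventually_lt_const one_pos] with n hn
  refine Set.disjoint_left.2 fun x hx hxL => ?_
  have := sum_le_tsum_subtype (hLn n) hfc (fun x => (hf x).1) (F := {x})
    (fun y hy => by rwa [Finset.mem_singleton.1 hy])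
  rw [Finset.sum_singleton, hf1 hx] at this
  exact absurd hn (not_lt.2 this)

theorem exists_tendsto_point
    (hLn : ∀ n, ∀ a b : ℝ, ((Ln n) ∩ Set.Icc a b).Finite)
    (hL : ∀ a b : ℝ, (L ∩ Set.Icc a b).Finite)
    (hweak : ∀ f : ℝ → ℝ, Continuous f → HasCompactSupport f →
      Tendsto (fun n => ∑' x : ↥(Ln n), f (x : ℝ)) atTop (𝓝 (∑' x : ↥L, f (x : ℝ))))
    {a : ℝ} (ha : a ∈ L) :
    ∃ (p : ℕ → ℝ) (δ : ℝ), 0 < δ ∧ Tendsto p atTop (𝓝 a) ∧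
      ∀ᶠ n in atTop, p n ∈ Ln n ∧ ∀ x ∈ Ln n, x ∈ Metric.closedBall a δ → x = p n := by
  have hLa : IsClosed (L \ {a}) := isClosed_of_finite_inter_Icc fun b c =>
    (hL b c).subset (Set.inter_subset_inter_left _ Set.sdiff_subset)
  obtain ⟨δ, hδ, hball⟩ := Metric.nhds_basis_closedBall.mem_iff.1
    (hLa.isOpen_compl.mem_nhds (show a ∈ (L \ {a})ᶜ from fun h => h.2 rfl))
  have hex : ∀ᶠ n in atTop, ∃ x, x ∈ Ln n ∧ x ∈ Metric.closedBall a δ := by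
    obtain ⟨f, hf1, hf0, hfc, hf⟩ := exists_continuous_one_zero_of_isCompact
      (isCompact_singleton (x := a)) (Metric.isOpen_ball (x := a) (ε := δ)).isClosed_compl
      (Set.disjoint_singleton_left.2 fun h => h (Metric.mem_ball_self hδ))
    have h := hweak f f.continuous hfc
    have h1 : 0 < ∑' x : ↥L, f (x : ℝ) := by
      have := sum_le_tsum_subtype hL hfc (fun x => (hf x).1) (F := {a})
        (fun y hy => by rwa [Finset.mem_singleton.1 hy])
      rw [Finset.sum_singleton, hf1 rfl] at this
      exact lt_of_lt_of_le one_pos this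
    filter_upwards [h.eventually_const_lt h1] with n hn
    by_contra hcon
    push Not at hcon
    refine hn.ne' ?_
    rw [tsum_congr (fun x : ↥(Ln n) => hf0 (fun hx =>
      hcon x x.2 (Metric.ball_subset_closedBall hx)))]
    simp
  have huniq : ∀ᶠ n in atTop, ∀ x ∈ Ln n, ∀ y ∈ Ln n, x ∈ Metric.closedBall a δ →
      y ∈ Metric.closedBall a δ → x = y := by
    obtain ⟨f, hf1, hf0, hfc, hf⟩ := exists_continuous_one_zero_of_isCompact
      (isCompact_closedBall a δ) hLa (Set.disjoint_left.2 fun x hx => hball hx)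
    have h := hweak f f.continuous hfc
    have h1 : ∑' x : ↥L, f (x : ℝ) = 1 := by
      rw [tsum_eq_single (⟨a, ha⟩ : ↥L) (fun x hx => hf0 ⟨x.2, fun h => hx (Subtype.ext h)⟩)]
      exact hf1 (Metric.mem_closedBall_self hδ.le)
    rw [h1] at h
    filter_upwards [h.eventually_lt_const one_lt_two] with n hn x hx y hy hxb hyb
    by_contra hxy
    have := sum_le_tsum_subtype (hLn n) hfc (fun x => (hf x).1) (F := {x, y})
      (fun t ht => by
        rcases Finset.mem_insert.1 ht with rfl | ht
        · exact hx
        · rwa [Finset.mem_singleton.1 ht])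
    rw [Finset.sum_pair hxy, hf1 hxb, hf1 hyb] at this
    simp only [Pi.one_apply] at this
    linarith
  set p : ℕ → ℝ := fun n =>
    if h : ∃ x, x ∈ Ln n ∧ x ∈ Metric.closedBall a δ then h.choose else 0 with hp
  have hpmem : ∀ᶠ n in atTop, p n ∈ Ln n ∧ p n ∈ Metric.closedBall a δ := by
    filter_upwards [hex] with n hn
    rw [hp]
    simp only [dif_pos hn]
    exact hn.choose_spec
  refine ⟨p, δ, hδ, ?_, ?_⟩
  · rw [Metric.tendsto_nhds]
    intro ε hε
    have hdis := eventually_disjoint_of_isCompact hLn hL hweak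
      (K := Metric.closedBall a δ \ Metric.ball a ε)
      ((isCompact_closedBall a δ).diff Metric.isOpen_ball)
      (Set.disjoint_left.2 fun x hx hxL => by
        by_cases hxa : x = a
        · exact hx.2 (by rw [hxa]; exact Metric.mem_ball_self hε)
        · exact hball hx.1 ⟨hxL, hxa⟩)
    filter_upwards [hdis, hpmem] with n hn hpn
    by_contra hcon
    exact Set.disjoint_left.1 hn ⟨hpn.2, hcon⟩ hpn.1
  · filter_upwards [huniq, hpmem] with n hn hpn
    exact ⟨hpn.1, fun x hx hxb => hn x hx (p n) hpn.1 hxb hpn.2⟩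

/-- Local weak convergence of simple point measures yields a matching of the points. -/
theorem exists_matching
    (hLn : ∀ n, ∀ a b : ℝ, ((Ln n) ∩ Set.Icc a b).Finite)
    (hL : ∀ a b : ℝ, (L ∩ Set.Icc a b).Finite)
    (hweak : ∀ f : ℝ → ℝ, Continuous f → HasCompactSupport f →
      Tendsto (fun n => ∑' x : ↥(Ln n), f (x : ℝ)) atTop (𝓝 (∑' x : ↥L, f (x : ℝ)))) :
    ∃ φ : ℕ → ℝ → ℝ, (∀ a ∈ L, Tendsto (fun n => φ n a) atTop (𝓝 a)) ∧
      (∀ a ∈ L, ∀ᶠ n in atTop, φ n a ∈ Ln n) ∧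
      ∀ ℓ, ℓ ∉ L → -ℓ ∉ L → ∀ᶠ n in atTop,
        (window hL ℓ).image (φ n) = window (hLn n) ℓ := by
  have hex : ∀ a ∈ L, ∃ (p : ℕ → ℝ) (δ : ℝ), 0 < δ ∧ Tendsto p atTop (𝓝 a) ∧
      ∀ᶠ n in atTop, p n ∈ Ln n ∧ ∀ x ∈ Ln n, x ∈ Metric.closedBall a δ → x = p n :=
    fun a ha => exists_tendsto_point hLn hL hweak ha
  choose! p δ hδ hp hpu using hex
  refine ⟨fun n a => p a n, hp, fun a ha => (hpu a ha).mono fun n hn => hn.1, ?_⟩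
  intro ℓ hℓ hℓ'
  have hdis := eventually_disjoint_of_isCompact hLn hL hweak
    (K := Set.Icc (-ℓ) ℓ \ ⋃ a ∈ window hL ℓ, Metric.ball a (δ a))
    (isCompact_Icc.diff (isOpen_biUnion fun _ _ => Metric.isOpen_ball))
    (Set.disjoint_left.2 fun x hx hxL => hx.2 (Set.mem_biUnion
      (mem_window.2 ⟨hxL, hx.1⟩) (Metric.mem_ball_self (hδ x hxL))))
  have h1 : ∀ᶠ n in atTop, ∀ a ∈ window hL ℓ, p a n ∈ Ln n ∧
      (∀ x ∈ Ln n, x ∈ Metric.closedBall a (δ a) → x = p a n) := by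
    rw [Filter.eventually_all_finset]
    exact fun a ha => hpu a (mem_window.1 ha).1
  have h2 : ∀ᶠ n in atTop, ∀ a ∈ window hL ℓ, p a n ∈ Set.Ioo (-ℓ) ℓ := by
    rw [Filter.eventually_all_finset]
    intro a ha
    obtain ⟨haL, ha1, ha2⟩ := mem_window.1 ha
    refine (hp a haL).eventually (isOpen_Ioo.mem_nhds ⟨lt_of_le_of_ne ha1 ?_,
      lt_of_le_of_ne ha2 ?_⟩)
    · rintro rfl
      exact hℓ' haL
    · rintro rfl
      exact hℓ haL
  filter_upwards [hdis, h1, h2] with n hn hn1 hn2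
  ext x
  rw [Finset.mem_image, mem_window]
  constructor
  · rintro ⟨a, ha, rfl⟩
    exact ⟨(hn1 a ha).1, (hn2 a ha).1.le, (hn2 a ha).2.le⟩
  · rintro ⟨hx, hx1⟩
    have hmem : x ∈ ⋃ a ∈ window hL ℓ, Metric.ball a (δ a) := by
      by_contra hcon
      exact Set.disjoint_left.1 hn ⟨hx1, hcon⟩ hx
    obtain ⟨a, ha, hxa⟩ := Set.mem_iUnion₂.1 hmem
    exact ⟨a, ha, ((hn1 a ha).2 x hx (Metric.ball_subset_closedBall hxa)).symm⟩

end PointConvergence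

theorem chordal_lt_of_norm_sub_lt {a b : ℂ} {ε : ℝ} (h : ‖b - a‖ < ε) :
    chordal (some a) (some b) < ε := by
  refine lt_of_le_of_lt ?_ h
  refine div_le_self (norm_nonneg _) (Real.one_le_sqrt.2 ?_)
  nlinarith [sq_nonneg ‖a‖, sq_nonneg ‖b‖, mul_nonneg (sq_nonneg ‖a‖) (sq_nonneg ‖b‖)]

theorem chordal_lt_of_le_norm {o₁ o₂ : Option ℂ} {M ε : ℝ} (hM : 0 < M) (hε : 2 / M < ε)
    (h₁ : ∀ a, o₁ = some a → M ≤ ‖a‖) (h₂ : ∀ a, o₂ = some a → M ≤ ‖a‖) :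
    chordal o₁ o₂ < ε := by
  have hM2 : 0 < 1 / M := one_div_pos.2 hM
  have h2M : 2 / M = 1 / M + 1 / M := by ring
  have hone : ∀ a : ℂ, M ≤ ‖a‖ → 1 / Real.sqrt (1 + ‖a‖ ^ 2) ≤ 1 / M := fun a ha =>
    one_div_le_one_div_of_le hM (Real.le_sqrt_of_sq_le (by nlinarith))
  match o₁, o₂, h₁, h₂ with
  | none, none, _, _ =>
    simp only [chordal]
    linarith
  | none, some b, _, h₂ =>
    simp only [chordal]
    linarith [hone b (h₂ b rfl)]
  | some a, none, h₁, _ =>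
    simp only [chordal]
    linarith [hone a (h₁ a rfl)]
  | some a, some b, h₁, h₂ =>
    have ha := h₁ a rfl
    have hb := h₂ b rfl
    have ha0 : 0 < ‖a‖ := hM.trans_le ha
    have hb0 : 0 < ‖b‖ := hM.trans_le hb
    refine lt_of_le_of_lt ?_ hε
    simp only [chordal]
    calc ‖b - a‖ / Real.sqrt ((1 + ‖a‖ ^ 2) * (1 + ‖b‖ ^ 2))
        ≤ (‖b‖ + ‖a‖) / (‖a‖ * ‖b‖) := by
          refine div_le_div₀ (by positivity) (norm_sub_le _ _) (by positivity) ?_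
          refine Real.le_sqrt_of_sq_le ?_
          nlinarith [sq_nonneg ‖a‖, sq_nonneg ‖b‖]
      _ = 1 / ‖a‖ + 1 / ‖b‖ := by field_simp
      _ ≤ 1 / M + 1 / M :=
          add_le_add (one_div_le_one_div_of_le hM ha) (one_div_le_one_div_of_le hM hb)
      _ = 2 / M := h2M.symm

section RationalFunctions

variable {P : Finset ℝ} {p v : ℕ → ℝ → ℝ} {w : ℝ → ℝ}

theorem tendsto_resolvent_term {z : ℂ} {a : ℝ}
    (hp : Tendsto (fun n => p n a) atTop (𝓝 a)) (hv : Tendsto (fun n => v n a) atTop (𝓝 (w a)))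
    (hz : z ≠ (a : ℂ)) :
    Tendsto (fun q : ℕ × ℂ => ((v q.1 a : ℝ) : ℂ) / ((p q.1 a : ℂ) - q.2)) (atTop ×ˢ 𝓝 z)
      (𝓝 ((w a : ℂ) / ((a : ℂ) - z))) := by
  have h1 : Tendsto (fun q : ℕ × ℂ => ((v q.1 a : ℝ) : ℂ)) (atTop ×ˢ 𝓝 z) (𝓝 (w a : ℂ)) :=
    (Complex.continuous_ofReal.tendsto _).comp (hv.comp tendsto_fst)
  have h2 : Tendsto (fun q : ℕ × ℂ => (p q.1 a : ℂ)) (atTop ×ˢ 𝓝 z) (𝓝 (a : ℂ)) :=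
    (Complex.continuous_ofReal.tendsto _).comp (hp.comp tendsto_fst)
  exact h1.div (h2.sub tendsto_snd) (sub_ne_zero.2 hz.symm)

/-- Near a limiting pole, the sums of simple fractions are uniformly large. -/
theorem eventually_le_norm_near_pole
    (hp : ∀ a ∈ P, Tendsto (fun n => p n a) atTop (𝓝 a))
    (hv : ∀ a ∈ P, Tendsto (fun n => v n a) atTop (𝓝 (w a)))
    {b : ℝ} (hb : b ∈ P) (hwb : 0 < w b) {M B : ℝ} (hM : 0 ≤ M) (hB : 0 ≤ B) :
    ∀ᶠ q : ℕ × ℂ in atTop ×ˢ 𝓝 (b : ℂ), ∀ T : ℂ, ‖T‖ ≤ B → (∀ a ∈ P, q.2 ≠ (p q.1 a : ℂ)) →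
      M ≤ ‖∑ a ∈ P, ((v q.1 a : ℝ) : ℂ) / ((p q.1 a : ℂ) - q.2) + T‖ := by
  have hrest : Tendsto (fun q : ℕ × ℂ => ∑ a ∈ P.erase b,
      ((v q.1 a : ℝ) : ℂ) / ((p q.1 a : ℂ) - q.2)) (atTop ×ˢ 𝓝 (b : ℂ))
      (𝓝 (∑ a ∈ P.erase b, (w a : ℂ) / ((a : ℂ) - b))) :=
    tendsto_finsetSum _ fun a ha => tendsto_resolvent_term (hp a (Finset.mem_of_mem_erase ha))
      (hv a (Finset.mem_of_mem_erase ha)) fun h =>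
        Finset.ne_of_mem_erase ha (Complex.ofReal_injective h).symm
  set ρ := ‖∑ a ∈ P.erase b, (w a : ℂ) / ((a : ℂ) - b)‖ with hρ
  have hρ0 : 0 ≤ ρ := norm_nonneg _
  have e1 := hrest.norm.eventually_lt_const (lt_add_one ρ)
  have e2 : ∀ᶠ q : ℕ × ℂ in atTop ×ˢ 𝓝 (b : ℂ), w b / 2 < v q.1 b :=
    ((hv b hb).comp tendsto_fst).eventually_const_lt (half_lt_self hwb)
  have hdist : Tendsto (fun q : ℕ × ℂ => ‖(p q.1 b : ℂ) - q.2‖) (atTop ×ˢ 𝓝 (b : ℂ)) (𝓝 0) := by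
    have h2 : Tendsto (fun q : ℕ × ℂ => (p q.1 b : ℂ)) (atTop ×ˢ 𝓝 (b : ℂ)) (𝓝 (b : ℂ)) :=
      (Complex.continuous_ofReal.tendsto _).comp ((hp b hb).comp tendsto_fst)
    simpa using (h2.sub tendsto_snd).norm
  have hQ : 0 < M + B + ρ + 1 := by positivity
  have e3 := hdist.eventually_lt_const (show 0 < w b / 2 / (M + B + ρ + 1) by positivity)
  filter_upwards [e1, e2, e3] with q h1 h2 h3 T hT hne
  have hpos : 0 < ‖(p q.1 b : ℂ) - q.2‖ := norm_pos_iff.2 (sub_ne_zero.2 (hne b hb).symm)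
  have hbig : M + B + ρ + 1 ≤ ‖((v q.1 b : ℝ) : ℂ) / ((p q.1 b : ℂ) - q.2)‖ := by
    rw [norm_div, Complex.norm_real, Real.norm_eq_abs, le_div_iff₀ hpos]
    rw [lt_div_iff₀ hQ] at h3
    linarith [le_abs_self (v q.1 b)]
  rw [← Finset.add_sum_erase P _ hb]
  set X := ((v q.1 b : ℝ) : ℂ) / ((p q.1 b : ℂ) - q.2)
  set Y := ∑ a ∈ P.erase b, ((v q.1 a : ℝ) : ℂ) / ((p q.1 a : ℂ) - q.2)
  have h4 : ‖X‖ ≤ ‖X + Y + T‖ + ‖Y‖ + ‖T‖ :=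
    calc ‖X‖ = ‖X + Y + T - Y - T‖ := by congr 1; ring
      _ ≤ ‖X + Y + T - Y‖ + ‖T‖ := norm_sub_le _ _
      _ ≤ _ := by linarith [norm_sub_le (X + Y + T) Y]
  linarith

theorem eventually_forall_mem_of_isCompact {K : Set ℂ} (hK : IsCompact K) {Q : ℕ → ℂ → Prop}
    (h : ∀ z ∈ K, ∀ᶠ q : ℕ × ℂ in atTop ×ˢ 𝓝 z, Q q.1 q.2) :
    ∀ᶠ n in atTop, ∀ y ∈ K, Q n y := by
  refine hK.induction_on (p := fun s => ∀ᶠ n in atTop, ∀ y ∈ s, Q n y) (by simp)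
    (fun s t hst ht => ht.mono fun n hn y hy => hn y (hst hy)) (fun s t hs ht => ?_)
    (fun z hz => ?_)
  · filter_upwards [hs, ht] with n h1 h2 y hy
    exact hy.elim (h1 y) (h2 y)
  · obtain ⟨pa, hpa, pb, hpb, hQ⟩ := Filter.eventually_prod_iff.1 (h z hz)
    exact ⟨{y | pb y}, mem_nhdsWithin_of_mem_nhds hpb, hpa.mono fun n hn y hy => hQ hn hy⟩

/-- Sums of simple fractions with converging poles and residues converge for the chordal
distance, uniformly on compact sets and stably under small perturbations. -/
theorem eventually_chordal_lt
    (hp : ∀ a ∈ P, Tendsto (fun n => p n a) atTop (𝓝 a))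
    (hv : ∀ a ∈ P, Tendsto (fun n => v n a) atTop (𝓝 (w a)))
    (hw : ∀ a ∈ P, 0 < w a) {K : Set ℂ} (hK : IsCompact K) {B ε : ℝ} (hB : 0 ≤ B) (hε : 0 < ε) :
    ∀ᶠ n in atTop, ∀ y ∈ K, ∀ T T' : ℂ, ‖T‖ ≤ B → ‖T - T'‖ ≤ ε / 2 →
      chordal
        (if ∃ a ∈ P, y = (p n a : ℂ) then none
          else some (∑ a ∈ P, ((v n a : ℝ) : ℂ) / ((p n a : ℂ) - y) + T'))
        (if ∃ a ∈ P, y = (a : ℂ) then none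
          else some (∑ a ∈ P, ((w a : ℝ) : ℂ) / ((a : ℂ) - y) + T)) < ε := by
  refine eventually_forall_mem_of_isCompact hK fun z _ => ?_
  have hp' : ∀ a ∈ P, Tendsto (fun _ : ℕ => a) atTop (𝓝 a) := fun a _ => tendsto_const_nhds
  have hw' : ∀ a ∈ P, Tendsto (fun _ : ℕ => w a) atTop (𝓝 (w a)) := fun a _ =>
    tendsto_const_nhds
  by_cases hz : ∃ b ∈ P, z = (b : ℂ)
  · obtain ⟨b, hb, rfl⟩ := hz
    have h1 := eventually_le_norm_near_pole hp hv hb (hw b hb) (M := 4 / ε) (B := B + ε / 2)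
      (by positivity) (by positivity)
    have h2 := eventually_le_norm_near_pole (p := fun _ a => a) (v := fun _ => w) hp' hw' hb
      (hw b hb) (M := 4 / ε) (B := B) (by positivity) hB
    filter_upwards [h1, h2] with q h1 h2 T T' hT hTT
    refine chordal_lt_of_le_norm (M := 4 / ε) (by positivity) ?_ ?_ ?_
    · rw [div_div_eq_mul_div]
      linarith
    · intro a ha
      split_ifs at ha with hex
      push Not at hex
      rw [← Option.some.inj ha]
      refine h1 T' ?_ hex
      calc ‖T'‖ = ‖T - (T - T')‖ := by congr 1; ring
        _ ≤ ‖T‖ + ‖T - T'‖ := norm_sub_le _ _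
        _ ≤ _ := add_le_add hT hTT
    · intro a ha
      split_ifs at ha with hex
      push Not at hex
      rw [← Option.some.inj ha]
      exact h2 T hT hex
  · push Not at hz
    have t1 : Tendsto (fun q : ℕ × ℂ => ∑ a ∈ P, ((v q.1 a : ℝ) : ℂ) / ((p q.1 a : ℂ) - q.2))
        (atTop ×ˢ 𝓝 z) (𝓝 (∑ a ∈ P, (w a : ℂ) / ((a : ℂ) - z))) :=
      tendsto_finsetSum _ fun a ha => tendsto_resolvent_term (hp a ha) (hv a ha) (hz a ha)
    have t2 : Tendsto (fun q : ℕ × ℂ => ∑ a ∈ P, ((w a : ℝ) : ℂ) / ((a : ℂ) - q.2))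
        (atTop ×ˢ 𝓝 z) (𝓝 (∑ a ∈ P, (w a : ℂ) / ((a : ℂ) - z))) :=
      tendsto_finsetSum _ fun a ha => tendsto_resolvent_term (p := fun _ a => a)
        (v := fun _ => w) (hp' a ha) (hw' a ha) (hz a ha)
    have hdiff := (t2.sub t1).norm
    rw [sub_self, norm_zero] at hdiff
    have hne : ∀ (p : ℕ → ℝ → ℝ), (∀ a ∈ P, Tendsto (fun n => p n a) atTop (𝓝 a)) →
        ∀ᶠ q : ℕ × ℂ in atTop ×ˢ 𝓝 z, ∀ a ∈ P, q.2 ≠ (p q.1 a : ℂ) := by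
      intro p hp
      rw [Filter.eventually_all_finset]
      intro a ha
      have h2 : Tendsto (fun q : ℕ × ℂ => (p q.1 a : ℂ)) (atTop ×ˢ 𝓝 z) (𝓝 (a : ℂ)) :=
        (Complex.continuous_ofReal.tendsto _).comp ((hp a ha).comp tendsto_fst)
      have h3 := ((tendsto_snd (f := atTop (α := ℕ)) (g := 𝓝 z)).sub h2).eventually_ne
        (sub_ne_zero.2 (hz a ha))
      exact h3.mono fun q hq => sub_ne_zero.1 hq
    filter_upwards [hdiff.eventually_lt_const (half_pos hε), hne p hp, hne (fun _ a => a) hp']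
      with q h1 h2 h3 T T' hT hTT
    rw [if_neg (by push Not; exact h2), if_neg (by push Not; exact h3)]
    refine chordal_lt_of_norm_sub_lt ?_
    rw [add_sub_add_comm]
    linarith [norm_add_le (∑ a ∈ P, ((w a : ℝ) : ℂ) / ((a : ℂ) - q.2)
      - ∑ a ∈ P, ((v q.1 a : ℝ) : ℂ) / ((p q.1 a : ℂ) - q.2)) (T - T')]

end RationalFunctions

theorem weightFun_image_eq {L L' : Set ℝ} (hL : ∀ a b : ℝ, (L ∩ Set.Icc a b).Finite)
    (hL' : ∀ a b : ℝ, (L' ∩ Set.Icc a b).Finite) {ψ : ℝ → ℝ} {x0 ℓ : ℝ} (hℓ : |x0| ≤ ℓ)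
    (himg : (window hL ℓ).image ψ = window hL' ℓ)
    (hmono : StrictMonoOn ψ (window hL ℓ : Set ℝ))
    (hx0 : ∀ b ∈ window hL ℓ, (x0 < b → x0 < ψ b) ∧ (b < x0 → ψ b < x0))
    (hx0L : x0 ∉ L) (γ : ℤ → ℝ) {a : ℝ} (ha : a ∈ window hL ℓ) :
    weightFun L' x0 γ (ψ a) = weightFun L x0 γ a := by
  have hx := abs_le.1 hℓ
  have hmem : ∀ {b}, b ∈ window hL ℓ → ψ b ∈ L' ∧ -ℓ ≤ ψ b ∧ ψ b ≤ ℓ := fun hb => by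
    rw [← mem_window (hL := hL'), ← himg]
    exact Finset.mem_image_of_mem ψ hb
  have hpre : ∀ {y}, y ∈ L' → -ℓ ≤ y → y ≤ ℓ → ∃ b ∈ window hL ℓ, ψ b = y := fun h1 h2 h3 => by
    rw [← Finset.mem_image, himg, mem_window]
    exact ⟨h1, h2, h3⟩
  have hne : ∀ {b}, b ∈ window hL ℓ → b ≠ x0 := fun hb h => hx0L (h ▸ (mem_window.1 hb).1)
  obtain ⟨-, ha1, ha2⟩ := mem_window.1 ha
  obtain ⟨-, hψa1, hψa2⟩ := hmem ha
  rcases lt_or_gt_of_ne (hne ha) with h | h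
  · have hset : L' ∩ Set.Ico (ψ a) x0 = ψ '' (L ∩ Set.Ico a x0) := by
      ext y
      constructor
      · rintro ⟨hy, hy1, hy2⟩
        obtain ⟨b, hb, rfl⟩ := hpre hy (by linarith) (by linarith)
        refine ⟨b, ⟨(mem_window.1 hb).1, (hmono.le_iff_le ha hb).1 hy1, ?_⟩, rfl⟩
        by_contra hcon
        linarith [(hx0 b hb).1 (lt_of_le_of_ne (not_lt.1 hcon) (hne hb).symm)]
      · rintro ⟨b, ⟨hb, hb1, hb2⟩, rfl⟩
        have hbw : b ∈ window hL ℓ := mem_window.2 ⟨hb, by linarith, by linarith⟩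
        exact ⟨(hmem hbw).1, (hmono.le_iff_le ha hbw).2 hb1, (hx0 b hbw).2 hb2⟩
    have hinj : Set.InjOn ψ (L ∩ Set.Ico a x0) := hmono.injOn.mono fun b hb =>
      mem_window.2 ⟨hb.1, by linarith [hb.2.1], by linarith [hb.2.2]⟩
    rw [weightFun, weightFun, if_neg (not_lt.2 ((hx0 a ha).2 h).le), if_neg (not_lt.2 h.le), hset,
      Nat.card_image_of_injOn hinj]
  · have hset : L' ∩ Set.Ioc x0 (ψ a) = ψ '' (L ∩ Set.Ioc x0 a) := by
      ext y
      constructor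
      · rintro ⟨hy, hy1, hy2⟩
        obtain ⟨b, hb, rfl⟩ := hpre hy (by linarith) (by linarith)
        refine ⟨b, ⟨(mem_window.1 hb).1, ?_, (hmono.le_iff_le hb ha).1 hy2⟩, rfl⟩
        by_contra hcon
        linarith [(hx0 b hb).2 (lt_of_le_of_ne (not_lt.1 hcon) (hne hb))]
      · rintro ⟨b, ⟨hb, hb1, hb2⟩, rfl⟩
        have hbw : b ∈ window hL ℓ := mem_window.2 ⟨hb, by linarith, by linarith⟩
        exact ⟨(hmem hbw).1, (hx0 b hbw).1 hb1, (hmono.le_iff_le hbw ha).2 hb2⟩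
    have hinj : Set.InjOn ψ (L ∩ Set.Ioc x0 a) := hmono.injOn.mono fun b hb =>
      mem_window.2 ⟨hb.1, by linarith [hb.2.1], by linarith [hb.2.2]⟩
    rw [weightFun, weightFun, if_pos ((hx0 a ha).1 h), if_pos h, hset,
      Nat.card_image_of_injOn hinj]

theorem eventually_strictMonoOn {φ : ℕ → ℝ → ℝ} {P : Finset ℝ}
    (hφ : ∀ a ∈ P, Tendsto (fun n => φ n a) atTop (𝓝 a)) :
    ∀ᶠ n in atTop, StrictMonoOn (φ n) (P : Set ℝ) := by
  have h : ∀ᶠ n in atTop, ∀ a ∈ P, ∀ b ∈ P, a < b → φ n a < φ n b := by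
    rw [Filter.eventually_all_finset]
    intro a ha
    rw [Filter.eventually_all_finset]
    intro b hb
    by_cases hab : a < b
    · exact ((hφ a ha).eventually_lt (hφ b hb) hab).mono fun n hn _ => hn
    · exact Filter.Eventually.of_forall fun n h => absurd h hab
  exact h.mono fun n hn a ha b hb hab => hn a ha b hb hab

theorem tendsto_weightFun {Ln : ℕ → Set ℝ} {L : Set ℝ}
    (hLn : ∀ n, ∀ a b : ℝ, ((Ln n) ∩ Set.Icc a b).Finite)
    (hL : ∀ a b : ℝ, (L ∩ Set.Icc a b).Finite) {φ : ℕ → ℝ → ℝ} {x0 ℓ : ℝ} (hℓ : |x0| ≤ ℓ)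
    (hφ : ∀ a ∈ L, Tendsto (fun n => φ n a) atTop (𝓝 a))
    (himg : ∀ᶠ n in atTop, (window hL ℓ).image (φ n) = window (hLn n) ℓ)
    (hx0 : x0 ∉ L) {γn : ℕ → ℤ → ℝ} {γ : ℤ → ℝ}
    (hγ : ∀ k, Tendsto (fun n => γn n k) atTop (𝓝 (γ k))) {a : ℝ} (ha : a ∈ window hL ℓ) :
    Tendsto (fun n => weightFun (Ln n) x0 (γn n) (φ n a)) atTop (𝓝 (weightFun L x0 γ a)) := by
  have hφ' : ∀ b ∈ window hL ℓ, Tendsto (fun n => φ n b) atTop (𝓝 b) := fun b hb =>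
    hφ b (mem_window.1 hb).1
  have hside : ∀ᶠ n in atTop, ∀ b ∈ window hL ℓ,
      (x0 < b → x0 < φ n b) ∧ (b < x0 → φ n b < x0) := by
    rw [Filter.eventually_all_finset]
    intro b hb
    refine Filter.Eventually.and ?_ ?_
    · by_cases h : x0 < b
      · exact ((hφ' b hb).eventually_const_lt h).mono fun n hn _ => hn
      · exact Filter.Eventually.of_forall fun n h' => absurd h' h
    · by_cases h : b < x0
      · exact ((hφ' b hb).eventually_lt_const h).mono fun n hn _ => hn
      · exact Filter.Eventually.of_forall fun n h' => absurd h' h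
  have heq : ∀ᶠ n in atTop,
      weightFun L x0 (γn n) a = weightFun (Ln n) x0 (γn n) (φ n a) := by
    filter_upwards [himg, hside, eventually_strictMonoOn hφ'] with n h1 h2 h3
    exact (weightFun_image_eq hL (hLn n) hℓ h1 h3 h2 hx0 _ ha).symm
  exact (hγ _).congr' heq

theorem abs_sum_shift_right_le {γ : ℤ → ℝ} {γbar c α' : ℝ} (hc : 0 < c) (hα'0 : 0 < α')
    (hα'1 : α' < 1)
    (h : ∀ m : ℕ, 1 ≤ m →
      |(∑ k ∈ Finset.range m, γ (k : ℤ)) - γbar * (m : ℝ)| ≤ c * (m : ℝ) ^ α') (m : ℕ) :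
    |∑ k ∈ Finset.range m, γ ((k : ℤ) + 1) - γbar * m| ≤ 3 * c * (m : ℝ) ^ α' := by
  rcases Nat.eq_zero_or_pos m with rfl | hm
  · simp [Real.zero_rpow hα'0.ne']
  have hm1 : (1 : ℝ) ≤ m := by exact_mod_cast hm
  have h1 := h 1 le_rfl
  have h2 := h (m + 1) (by omega)
  rw [Finset.sum_range_succ'] at h2
  simp only [Finset.sum_range_one, Nat.cast_zero, Nat.cast_one, mul_one, Real.one_rpow] at h1
  push_cast at h2
  have h3 : ((m : ℝ) + 1) ^ α' ≤ 2 * (m : ℝ) ^ α' :=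
    calc ((m : ℝ) + 1) ^ α' ≤ (2 * (m : ℝ)) ^ α' :=
          Real.rpow_le_rpow (by positivity) (by linarith) hα'0.le
      _ = 2 ^ α' * (m : ℝ) ^ α' := Real.mul_rpow (by norm_num) (by positivity)
      _ ≤ 2 ^ (1 : ℝ) * (m : ℝ) ^ α' := by
          gcongr
          norm_num
      _ = _ := by rw [Real.rpow_one]
  have h4 : 1 ≤ (m : ℝ) ^ α' := Real.one_le_rpow hm1 hα'0.le
  rw [abs_le] at h1 h2 ⊢
  constructor <;> nlinarith

theorem abs_sum_shift_left_le {γ : ℤ → ℝ} {γbar c α' : ℝ} (hc : 0 < c) (hα'0 : 0 < α')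
    (h1 : |γ 0 - γbar| ≤ c)
    (h : ∀ m : ℕ, 1 ≤ m →
      |(∑ k ∈ Finset.range m, γ (-(k : ℤ) - 1)) - γbar * (m : ℝ)| ≤ c * (m : ℝ) ^ α') (m : ℕ) :
    |∑ k ∈ Finset.range m, γ (-(k : ℤ)) - γbar * m| ≤ 3 * c * (m : ℝ) ^ α' := by
  rcases m with _ | m
  · simp [Real.zero_rpow hα'0.ne']
  have h2 : |(∑ k ∈ Finset.range m, γ (-(k : ℤ) - 1)) - γbar * (m : ℝ)| ≤ c * (m : ℝ) ^ α' := by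
    rcases Nat.eq_zero_or_pos m with rfl | hm
    · simp [Real.zero_rpow hα'0.ne']
    · exact h m hm
  have h3 : (m : ℝ) ^ α' ≤ ((m : ℝ) + 1) ^ α' :=
    Real.rpow_le_rpow (by positivity) (by linarith) hα'0.le
  have h4 : 1 ≤ ((m : ℝ) + 1) ^ α' :=
    Real.one_le_rpow (by linarith [(Nat.cast_nonneg m : (0 : ℝ) ≤ m)]) hα'0.le
  have hsum : ∑ k ∈ Finset.range (m + 1), γ (-(k : ℤ))
      = ∑ k ∈ Finset.range m, γ (-(k : ℤ) - 1) + γ 0 := by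
    rw [Finset.sum_range_succ']
    congr 1
    exact Finset.sum_congr rfl fun k _ => by
      congr 1
      push_cast
      ring
  rw [hsum]
  push_cast
  rw [abs_le] at h1 h2 ⊢
  constructor <;> nlinarith

theorem abs_sum_sub_le_of_tendsto {γn : ℕ → ℤ → ℝ} {γ : ℤ → ℝ}
    (hγ : ∀ k, Tendsto (fun n => γn n k) atTop (𝓝 (γ k))) {s : Finset ℕ} {e : ℕ → ℤ} {a b : ℝ}
    (h : ∀ n, |∑ k ∈ s, γn n (e k) - a| ≤ b) : |∑ k ∈ s, γ (e k) - a| ≤ b :=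
  le_of_tendsto (((tendsto_finsetSum s fun k _ => hγ (e k)).sub_const a).abs)
    (Filter.Eventually.of_forall h)

theorem sum_one_div_rpow_le_of_tsum_le {L : Set ℝ} {κ ℓ T : ℝ} (hT : 0 ≤ T)
    (h : (∑' x : ↥{t | t ∈ L ∧ ℓ < |t|}, ENNReal.ofReal (1 / |(x : ℝ)| ^ κ))
        ≤ ENNReal.ofReal T) (F : Finset ℝ) (hF : ∀ t ∈ F, t ∈ L ∧ ℓ < |t|) :
    ∑ t ∈ F, 1 / |t| ^ κ ≤ T := by
  rw [← ENNReal.ofReal_le_ofReal_iff hT, ENNReal.ofReal_sum_of_nonneg fun t _ => by positivity]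
  refine le_trans ?_ h
  have h2 := ENNReal.sum_le_tsum (f := fun x : ↥{t | t ∈ L ∧ ℓ < |t|} =>
    ENNReal.ofReal (1 / |(x : ℝ)| ^ κ)) (F.subtype (· ∈ {t | t ∈ L ∧ ℓ < |t|}))
  have hF' : ∀ t ∈ F, t ∈ {t | t ∈ L ∧ ℓ < |t|} := hF
  rwa [Finset.sum_subtype_of_mem (fun x : ℝ => ENNReal.ofReal (1 / |x| ^ κ)) hF'] at h2

theorem sum_one_div_rpow_le_of_matching {Ln : ℕ → Set ℝ} {L : Set ℝ} {φ : ℕ → ℝ → ℝ}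
    (hφ : ∀ a ∈ L, Tendsto (fun n => φ n a) atTop (𝓝 a))
    (hφ' : ∀ a ∈ L, ∀ᶠ n in atTop, φ n a ∈ Ln n) {κ ℓ T : ℝ} (hℓ : 1 ≤ ℓ)
    (h : ∀ n, ∀ F : Finset ℝ, (∀ t ∈ F, t ∈ Ln n ∧ ℓ < |t|) → ∑ t ∈ F, 1 / |t| ^ κ ≤ T)
    (F : Finset ℝ) (hF : ∀ t ∈ F, t ∈ L ∧ ℓ < |t|) :
    ∑ t ∈ F, 1 / |t| ^ κ ≤ T := by
  have hlim : Tendsto (fun n => ∑ t ∈ F, 1 / |φ n t| ^ κ) atTop (𝓝 (∑ t ∈ F, 1 / |t| ^ κ)) := by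
    refine tendsto_finsetSum F fun t ht => ?_
    have ht0 : 0 < |t| := by linarith [(hF t ht).2]
    exact tendsto_const_nhds.div ((hφ t (hF t ht).1).abs.rpow_const (Or.inl ht0.ne'))
      (Real.rpow_pos_of_pos ht0 κ).ne'
  have hmem : ∀ᶠ n in atTop, ∀ t ∈ F, φ n t ∈ Ln n ∧ ℓ < |φ n t| := by
    rw [Filter.eventually_all_finset]
    exact fun t ht => (hφ' t (hF t ht).1).and
      ((hφ t (hF t ht).1).abs.eventually_const_lt (hF t ht).2)
  refine le_of_tendsto hlim ?_
  filter_upwards [hmem, eventually_strictMonoOn fun t ht => hφ t (hF t ht).1] with n h1 h2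
  have h3 := h n (F.image (φ n)) fun t ht => by
    obtain ⟨s, hs, rfl⟩ := Finset.mem_image.1 ht
    exact h1 s hs
  rwa [Finset.sum_image h2.injOn] at h3

theorem card_window_le {L : Set ℝ} (hL : ∀ a b : ℝ, (L ∩ Set.Icc a b).Finite) {κ R M T x : ℝ}
    (hκ : 0 ≤ κ) (hR : 1 ≤ R) (hM : ((window hL R).card : ℝ) ≤ M)
    (hT : ∀ F : Finset ℝ, (∀ t ∈ F, t ∈ L ∧ 1 < |t|) → ∑ t ∈ F, 1 / |t| ^ κ ≤ T)
    (hx : R ≤ x) : ((window hL x).card : ℝ) ≤ (M + T) * x ^ κ := by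
  have hx0 : 0 < x := by linarith
  have hxκ : 0 < x ^ κ := Real.rpow_pos_of_pos hx0 _
  set F : Finset ℝ := {t ∈ window hL x | 1 < |t|} with hF
  have hsub : window hL x ⊆ window hL R ∪ F := by
    intro t ht
    rw [Finset.mem_union, hF, Finset.mem_filter]
    by_cases h1 : 1 < |t|
    · exact Or.inr ⟨ht, h1⟩
    · have := abs_le.1 (not_lt.1 h1)
      exact Or.inl (mem_window.2 ⟨(mem_window.1 ht).1, by linarith, by linarith⟩)
  have h1 : ((window hL x).card : ℝ) ≤ (window hL R).card + F.card := by
    exact_mod_cast (Finset.card_le_card hsub).trans (Finset.card_union_le _ _)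
  have h2 : (F.card : ℝ) * (1 / x ^ κ) ≤ T := by
    refine le_trans ?_ (hT F fun t ht => ?_)
    · rw [← nsmul_eq_mul]
      refine Finset.card_nsmul_le_sum _ _ _ fun t ht => ?_
      rw [hF, Finset.mem_filter, mem_window] at ht
      have : |t| ≤ x := abs_le.2 ht.1.2
      exact one_div_le_one_div_of_le (Real.rpow_pos_of_pos (by linarith [ht.2]) _)
        (Real.rpow_le_rpow (abs_nonneg _) this hκ)
    · rw [hF, Finset.mem_filter, mem_window] at ht
      exact ⟨ht.1.1, ht.2⟩
  have h3 : (F.card : ℝ) ≤ T * x ^ κ := by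
    rwa [mul_one_div, div_le_iff₀ hxκ] at h2
  have h4 : 1 ≤ x ^ κ := Real.one_le_rpow (by linarith) hκ
  have hM0 : 0 ≤ M := le_trans (Nat.cast_nonneg _) hM
  nlinarith

/-- Continuity of the Stieltjes transform with respect to the configuration and the
weights: under the assumptions of the continuity theorem, the Stieltjes transforms
`S_n` of the weighted measures `Λ_n` converge to `S + γ̄h` uniformly on compact sets
for the chordal distance on the Riemann sphere (`∞` at the poles). -/
theorem stieltjes_transform_continuity
    (Ln : ℕ → Set ℝ) (L : Set ℝ)
    (hLnfin : ∀ n, ∀ a b : ℝ, ((Ln n) ∩ Set.Icc a b).Finite)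
    (hLfin : ∀ a b : ℝ, (L ∩ Set.Icc a b).Finite)
    (hweak : ∀ f : ℝ → ℝ, Continuous f → HasCompactSupport f →
      Tendsto (fun n => ∑' x : ↥(Ln n), f (x : ℝ)) atTop (𝓝 (∑' x : ↥L, f (x : ℝ))))
    (α : ℝ) (hα : α ∈ Set.Ioo (0 : ℝ) 1)
    (τ : ℝ → ℝ) (hτpos : ∀ ℓ : ℝ, 1 ≤ ℓ → 0 < τ ℓ)
    (hτ0 : Tendsto τ atTop (𝓝 0))
    (hτ : ∀ n, ∀ ℓ : ℝ, 1 ≤ ℓ →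
      (∑' x : ↥{t | t ∈ Ln n ∧ ℓ < |t|}, ENNReal.ofReal (1 / |(x : ℝ)| ^ (1 + α)))
        ≤ ENNReal.ofReal (τ ℓ))
    (H : ℕ → ℝ → ℝ) (HL : ℝ → ℝ)
    (hH : ∀ n, ∀ ℓ : ℝ, 1 ≤ ℓ →
      Tendsto (fun ℓ' : ℝ =>
          ∑' x : ↥{t | t ∈ Ln n ∧ ℓ < |t| ∧ |t| < ℓ'}, (1 / (x : ℝ)))
        atTop (𝓝 (H n ℓ)))
    (hHL : ∀ ℓ : ℝ, 1 ≤ ℓ →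
      Tendsto (fun ℓ' : ℝ =>
          ∑' x : ↥{t | t ∈ L ∧ ℓ < |t| ∧ |t| < ℓ'}, (1 / (x : ℝ)))
        atTop (𝓝 (HL ℓ)))
    (h : ℝ) (Hinf : ℝ → ℝ)
    (hHinf : ∀ ℓ : ℝ, 1 ≤ ℓ → ℓ ∉ L → -ℓ ∉ L →
      Tendsto (fun n => H n ℓ) atTop (𝓝 (Hinf ℓ)))
    (hh : Tendsto Hinf (atTop ⊓ Filter.principal {ℓ : ℝ | ℓ ∉ L ∧ -ℓ ∉ L}) (𝓝 h))
    (hHL0 : Tendsto HL (atTop ⊓ Filter.principal {ℓ : ℝ | ℓ ∉ L ∧ -ℓ ∉ L}) (𝓝 0))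
    (γn : ℕ → ℤ → ℝ) (γ : ℤ → ℝ)
    (hγnpos : ∀ n k, 0 < γn n k) (hγpos : ∀ k, 0 < γ k)
    (hγlim : ∀ k, Tendsto (fun n => γn n k) atTop (𝓝 (γ k)))
    (γbar c α' : ℝ) (hγbar : 0 < γbar) (hc : 0 < c)
    (hα'pos : 0 < α') (hα' : (1 + α) * α' < 1)
    (hγsum1 : ∀ n, ∀ m : ℕ, 1 ≤ m →
      |(∑ k ∈ Finset.range m, γn n (k : ℤ)) - γbar * (m : ℝ)| ≤ c * (m : ℝ) ^ α')
    (hγsum2 : ∀ n, ∀ m : ℕ, 1 ≤ m →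
      |(∑ k ∈ Finset.range m, γn n (-(k : ℤ) - 1)) - γbar * (m : ℝ)| ≤ c * (m : ℝ) ^ α')
    (x0 : ℝ) (hx0 : x0 ∉ L)
    (Sn : ℕ → ℂ → ℂ) (S : ℂ → ℂ)
    (hSn : ∀ n, x0 ∉ Ln n → ∀ z : ℂ, (∀ x ∈ Ln n, z ≠ (x : ℂ)) →
      Tendsto
        (fun ℓ : ℝ => ∑' x : ↥((Ln n) ∩ Set.Icc (-ℓ) ℓ),
          ((weightFun (Ln n) x0 (γn n) (x : ℝ) : ℝ) : ℂ) / (((x : ℝ) : ℂ) - z))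
        atTop (𝓝 (Sn n z)))
    (hS : ∀ z : ℂ, (∀ x ∈ L, z ≠ (x : ℂ)) →
      Tendsto
        (fun ℓ : ℝ => ∑' x : ↥(L ∩ Set.Icc (-ℓ) ℓ),
          ((weightFun L x0 γ (x : ℝ) : ℝ) : ℂ) / (((x : ℝ) : ℂ) - z))
        atTop (𝓝 (S z))) :
    ∀ K : Set ℂ, IsCompact K → ∀ ε : ℝ, 0 < ε →
      ∃ N : ℕ, ∀ n ≥ N, ∀ z ∈ K,
        chordal
          (if ∃ x ∈ Ln n, z = (x : ℂ) then none else some (Sn n z))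
          (if ∃ x ∈ L, z = (x : ℂ) then none
            else some (S z + ((γbar * h : ℝ) : ℂ))) < ε := by
  intro K hK ε hε
  obtain ⟨φ, hφ, hφmem, himg⟩ := exists_matching hLnfin hLfin hweak
  obtain ⟨ρ, hρ0, hρ⟩ : ∃ ρ : ℝ, 0 ≤ ρ ∧ ∀ z ∈ K, ‖z‖ ≤ ρ := by
    obtain ⟨ρ, hρ⟩ := hK.isBounded.exists_norm_le
    exact ⟨max ρ 0, le_max_right _ _, fun z hz => (hρ z hz).trans (le_max_left _ _)⟩
  have hκ0 : 0 ≤ 1 + α := by linarith [hα.1]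
  have hκ2 : 1 + α ≤ 2 := by linarith [hα.2]
  have hα'1 : α' < 1 := by nlinarith [hα.1]
  have hC : 0 ≤ 3 * c := by positivity
  -- bounds on the weights, uniform in `n` and valid in the limit
  have hγ1 := fun n => abs_sum_shift_right_le hc hα'pos hα'1 (hγsum1 n)
  have hγ2 := fun n => abs_sum_shift_left_le hc hα'pos
    (by simpa using hγsum1 n 1 le_rfl) (hγsum2 n)
  have hγ1L : ∀ m : ℕ, |∑ k ∈ Finset.range m, γ ((k : ℤ) + 1) - γbar * m|
      ≤ 3 * c * (m : ℝ) ^ α' := fun m =>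
    abs_sum_sub_le_of_tendsto hγlim (e := fun k => (k : ℤ) + 1) fun n => hγ1 n m
  have hγ2L : ∀ m : ℕ, |∑ k ∈ Finset.range m, γ (-(k : ℤ)) - γbar * m|
      ≤ 3 * c * (m : ℝ) ^ α' := fun m =>
    abs_sum_sub_le_of_tendsto hγlim (e := fun k => -(k : ℤ)) fun n => hγ2 n m
  -- bounds on the points, uniform in `n` and valid in the limit
  have hTn : ∀ n, ∀ ℓ : ℝ, 1 ≤ ℓ → ∀ F : Finset ℝ, (∀ t ∈ F, t ∈ Ln n ∧ ℓ < |t|) →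
      ∑ t ∈ F, 1 / |t| ^ (1 + α) ≤ τ ℓ := fun n ℓ hℓ =>
    sum_one_div_rpow_le_of_tsum_le (hτpos ℓ hℓ).le (hτ n ℓ hℓ)
  have hTL : ∀ ℓ : ℝ, 1 ≤ ℓ → ∀ F : Finset ℝ, (∀ t ∈ F, t ∈ L ∧ ℓ < |t|) →
      ∑ t ∈ F, 1 / |t| ^ (1 + α) ≤ τ ℓ := fun ℓ hℓ =>
    sum_one_div_rpow_le_of_matching hφ hφmem hℓ fun n => hTn n ℓ hℓ
  have := neBot_atTop_inf_avoiding hLfin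
  have hgood : ∀ᶠ r in atTop ⊓ 𝓟 {ℓ : ℝ | ℓ ∉ L ∧ -ℓ ∉ L}, r ∉ L ∧ -r ∉ L :=
    Filter.Eventually.filter_mono inf_le_right (Filter.eventually_principal.2 fun _ h => h)
  obtain ⟨R, hR1, hRL⟩ := (((eventually_ge_atTop (1 : ℝ)).filter_mono inf_le_left).and
    hgood).exists
  set A : ℝ := ((window hLfin R).card : ℝ) + τ 1 with hA
  have hA0 : 0 ≤ A := add_nonneg (Nat.cast_nonneg _) (hτpos 1 le_rfl).le
  have hNL : ∀ x, R ≤ x → ((window hLfin x).card : ℝ) ≤ A * x ^ (1 + α) := fun x hx =>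
    card_window_le hLfin hκ0 hR1 le_rfl (hTL 1 le_rfl) hx
  have hNn : ∀ᶠ n in atTop, ∀ x, R ≤ x →
      ((window (hLnfin n) x).card : ℝ) ≤ A * x ^ (1 + α) := by
    filter_upwards [himg R hRL.1 hRL.2] with n hn x hx
    refine card_window_le (hLnfin n) hκ0 hR1 ?_ (hTn n 1 le_rfl) hx
    rw [← hn]
    exact Nat.cast_le.2 Finset.card_image_le
  -- choice of the truncation level
  set err : ℝ → ℝ := fun ℓ =>
    2 * (2 * (3 * c * A ^ α') * (4 / (1 - (1 + α) * α') + 2) * ℓ ^ ((1 + α) * α' - 1))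
      + γbar * (2 * ρ * τ ℓ) with herr
  have herr0 : Tendsto err atTop (𝓝 0) := by
    have h1 : Tendsto (fun ℓ : ℝ => ℓ ^ ((1 + α) * α' - 1)) atTop (𝓝 0) := by
      have := tendsto_rpow_neg_atTop (y := 1 - (1 + α) * α') (by linarith)
      simpa using this
    have h2 := ((h1.const_mul (2 * (3 * c * A ^ α') * (4 / (1 - (1 + α) * α') + 2))).const_mul
      2).add ((hτ0.const_mul (2 * ρ)).const_mul γbar)
    simpa using h2
  have hHlim : Tendsto (fun ℓ => |γbar * (HL ℓ + h) - γbar * Hinf ℓ|)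
      (atTop ⊓ 𝓟 {ℓ : ℝ | ℓ ∉ L ∧ -ℓ ∉ L}) (𝓝 0) := by
    have := (((hHL0.add_const h).const_mul γbar).sub (hh.const_mul γbar)).abs
    simpa using this
  obtain ⟨ℓ, ⟨⟨⟨hℓgood, hℓR⟩, hℓx0⟩, hℓρ⟩, hℓerr, hℓH⟩ :=
    ((((hgood.and ((eventually_ge_atTop R).filter_mono inf_le_left)).and
      ((eventually_ge_atTop |x0|).filter_mono inf_le_left)).and
      ((eventually_ge_atTop (2 * ρ)).filter_mono inf_le_left)).and
      (((herr0.eventually_lt_const (show 0 < ε / 8 by positivity)).filter_mono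
        inf_le_left).and (hHlim.eventually_lt_const (show 0 < ε / 8 by positivity)))).exists
  have hℓ1 : 1 ≤ ℓ := hR1.trans hℓR
  have himgℓ := himg ℓ hℓgood.1 hℓgood.2
  have hφw : ∀ a ∈ window hLfin ℓ, Tendsto (fun n => φ n a) atTop (𝓝 a) := fun a ha =>
    hφ a (mem_window.1 ha).1
  have hHn : ∀ᶠ n in atTop, |γbar * (HL ℓ + h) - γbar * H n ℓ| < ε / 8 :=
    ((((hHinf ℓ hℓ1 hℓgood.1 hℓgood.2).const_mul γbar).const_sub
      (γbar * (HL ℓ + h))).abs).eventually_lt_const hℓH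
  have hx0n : ∀ᶠ n in atTop, x0 ∉ Ln n :=
    (eventually_disjoint_of_isCompact hLnfin hLfin hweak (isCompact_singleton (x := x0))
      (Set.disjoint_singleton_left.2 hx0)).mono fun n hn => Set.disjoint_singleton_left.1 hn
  have hchord := eventually_chordal_lt (P := window hLfin ℓ) (p := φ)
    (v := fun n a => weightFun (Ln n) x0 (γn n) (φ n a)) (w := weightFun L x0 γ) hφw
    (fun a ha => tendsto_weightFun hLnfin hLfin hℓx0 hφ himgℓ hx0 hγlim ha)
    (fun a _ => hγpos _) hK (B := |γbar * (HL ℓ + h)| + ε / 8) (by positivity) hε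
  have herr_le : ∀ z ∈ K, 2 * (2 * (3 * c * A ^ α') * (4 / (1 - (1 + α) * α') + 2)
      * ℓ ^ ((1 + α) * α' - 1)) + γbar * (2 * ‖z‖ * τ ℓ) ≤ ε / 8 := by
    intro z hz
    refine le_trans ?_ hℓerr.le
    have hτ' := (hτpos ℓ hℓ1).le
    simp only [herr]
    gcongr
    exact hρ z hz
  obtain ⟨N, hN⟩ := Filter.eventually_atTop.1 (hchord.and (hx0n.and (hHn.and (hNn.and
    (himgℓ.and (eventually_strictMonoOn hφw))))))
  refine ⟨N, fun n hn z hz => ?_⟩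
  obtain ⟨hch, hx0n, hHn, hNn, himgn, hmono⟩ := hN n hn
  have hzℓ : 2 * ‖z‖ ≤ ℓ := by linarith [hρ z hz]
  have hzreal : ∀ x : ℝ, z = (x : ℂ) → -ℓ ≤ x ∧ x ≤ ℓ := by
    rintro x rfl
    rw [Complex.norm_real, Real.norm_eq_abs] at hzℓ
    exact abs_le.1 (by linarith [abs_nonneg x])
  have hpole : (∃ x ∈ L, z = (x : ℂ)) ↔ ∃ a ∈ window hLfin ℓ, z = (a : ℂ) := by
    constructor
    · rintro ⟨x, hx, hzx⟩
      exact ⟨x, mem_window.2 ⟨hx, hzreal x hzx⟩, hzx⟩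
    · rintro ⟨x, hx, hzx⟩
      exact ⟨x, (mem_window.1 hx).1, hzx⟩
  have hpolen : (∃ x ∈ Ln n, z = (x : ℂ)) ↔ ∃ a ∈ window hLfin ℓ, z = (φ n a : ℂ) := by
    constructor
    · rintro ⟨x, hx, hzx⟩
      have hxw : x ∈ window (hLnfin n) ℓ := mem_window.2 ⟨hx, hzreal x hzx⟩
      rw [← himgn] at hxw
      obtain ⟨a, ha, rfl⟩ := Finset.mem_image.1 hxw
      exact ⟨a, ha, hzx⟩
    · rintro ⟨a, ha, hza⟩
      have haw := Finset.mem_image_of_mem (φ n) ha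
      rw [himgn, mem_window] at haw
      exact ⟨φ n a, haw.1, hza⟩
  have hsumn : ∑ x ∈ window (hLnfin n) ℓ,
        ((weightFun (Ln n) x0 (γn n) x : ℝ) : ℂ) / ((x : ℂ) - z)
      = ∑ a ∈ window hLfin ℓ,
        ((weightFun (Ln n) x0 (γn n) (φ n a) : ℝ) : ℂ) / ((φ n a : ℂ) - z) := by
    rw [← himgn, Finset.sum_image hmono.injOn]
  set RL := ∑ a ∈ window hLfin ℓ, ((weightFun L x0 γ a : ℝ) : ℂ) / ((a : ℂ) - z) with hRL'
  set Rn := ∑ a ∈ window hLfin ℓ,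
    ((weightFun (Ln n) x0 (γn n) (φ n a) : ℝ) : ℂ) / ((φ n a : ℂ) - z) with hRn
  set m : ℂ := ((γbar * (HL ℓ + h) : ℝ) : ℂ) with hm
  obtain ⟨T, hTm, hT⟩ : ∃ T : ℂ, ‖T - m‖ ≤ ε / 8 ∧
      (¬ (∃ x ∈ L, z = (x : ℂ)) → S z + ((γbar * h : ℝ) : ℂ) = RL + T) := by
    by_cases hzL : ∃ x ∈ L, z = (x : ℂ)
    · exact ⟨m, by rw [sub_self, norm_zero]; positivity, fun h => absurd hzL h⟩
    · refine ⟨S z + ((γbar * h : ℝ) : ℂ) - RL, ?_, fun _ => by ring⟩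
      have hbound := norm_stieltjes_sub_window_le hLfin hC hα'pos hκ0 hκ2 hα' hγbar.le hγ1L hγ2L
        hℓ1 hℓx0 hA0 (fun x hx => hNL x (hℓR.trans hx)) hzℓ
        (hS z (by push Not at hzL; exact hzL)) (hHL ℓ hℓ1) (hTL ℓ hℓ1)
      refine le_trans (le_of_eq ?_) (hbound.trans (herr_le z hz))
      rw [hm, ← hRL']
      push_cast
      congr 1
      ring
  obtain ⟨T', hTT', hT'⟩ : ∃ T' : ℂ, ‖T - T'‖ ≤ ε / 2 ∧
      (¬ (∃ x ∈ Ln n, z = (x : ℂ)) → Sn n z = Rn + T') := by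
    by_cases hzL : ∃ x ∈ Ln n, z = (x : ℂ)
    · exact ⟨T, by rw [sub_self, norm_zero]; positivity, fun h => absurd hzL h⟩
    · refine ⟨Sn n z - Rn, ?_, fun _ => by ring⟩
      have hbound := norm_stieltjes_sub_window_le (hLnfin n) hC hα'pos hκ0 hκ2 hα' hγbar.le
        (hγ1 n) (hγ2 n) hℓ1 hℓx0 hA0 (fun x hx => hNn x (hℓR.trans hx)) hzℓ
        (hSn n hx0n z (by push Not at hzL; exact hzL)) (hH n ℓ hℓ1) (hTn n ℓ hℓ1)
      rw [hsumn] at hbound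
      have hb := hbound.trans (herr_le z hz)
      have hHc : ‖m - ((γbar * H n ℓ : ℝ) : ℂ)‖ < ε / 8 := by
        rw [hm, ← Complex.ofReal_sub, Complex.norm_real]
        exact hHn
      calc ‖T - (Sn n z - Rn)‖
          = ‖(T - m) + (m - ((γbar * H n ℓ : ℝ) : ℂ))
              - (Sn n z - Rn - ((γbar * H n ℓ : ℝ) : ℂ))‖ := by congr 1; ring
        _ ≤ ‖T - m‖ + ‖m - ((γbar * H n ℓ : ℝ) : ℂ)‖
              + ‖Sn n z - Rn - ((γbar * H n ℓ : ℝ) : ℂ)‖ :=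
            (norm_sub_le _ _).trans (add_le_add (norm_add_le _ _) le_rfl)
        _ ≤ ε / 2 := by linarith
  have hTB : ‖T‖ ≤ |γbar * (HL ℓ + h)| + ε / 8 := by
    have hmn : ‖m‖ = |γbar * (HL ℓ + h)| := by rw [hm, Complex.norm_real, Real.norm_eq_abs]
    rw [← hmn]
    linarith [norm_le_insert' T m]
  have hfinal := hch z hz T T' hTB hTT'
  have e1 : (if ∃ x ∈ Ln n, z = (x : ℂ) then none else some (Sn n z))
      = if ∃ a ∈ window hLfin ℓ, z = (φ n a : ℂ) then none else some (Rn + T') := by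
    by_cases hzL : ∃ x ∈ Ln n, z = (x : ℂ)
    · rw [if_pos hzL, if_pos (hpolen.1 hzL)]
    · rw [if_neg hzL, if_neg (fun hcon => hzL (hpolen.2 hcon)), hT' hzL]
  have e2 : (if ∃ x ∈ L, z = (x : ℂ) then none else some (S z + ((γbar * h : ℝ) : ℂ)))
      = if ∃ a ∈ window hLfin ℓ, z = (a : ℂ) then none else some (RL + T) := by
    by_cases hzL : ∃ x ∈ L, z = (x : ℂ)
    · rw [if_pos hzL, if_pos (hpole.1 hzL)]
    · rw [if_neg hzL, if_neg (fun hcon => hzL (hpole.2 hcon)), hT hzL]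
  rw [e1, e2]
  exact hfinal
end

section
/- Let L and L' be locally finite subsets of ℝ whose points strictly interlace: between any two consecutive points of L there is exactly one point of L', and between any two consecutive points of L' there is exactly one point of L. Let Ξ and Ξ' be the counting measures of L and L'. Then for every α ∈ (0,1) and every ℓ ≥ 1: ∫_ℝ 1(|λ| > ℓ)/|λ|^{1+α} dΞ'(λ) ≤ 2/ℓ + ∫_ℝ 1(|λ| > ℓ)/|λ|^{1+α} dΞ(λ), and for all ℓ'' > ℓ' ≥ 1: |∫_ℝ 1(ℓ' ≤ |λ| < ℓ'')/|λ| dΞ'(λ) − ∫_ℝ 1(ℓ' ≤ |λ| < ℓ'')/|λ| dΞ(λ)| ≤ 4/ℓ'. -/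
open Filter Set Topology

open scoped ENNReal Pointwise

/-- If each gap of `A` contains a point of `B`, then on an order-connected set bounded below, the
sum over `A` of a function that is antitone and bounded by `C` there exceeds the sum over `B` by at
most `C`. -/
theorem tsum_inter_le_add_tsum_inter {A B S : Set ℝ}
    (hfin : ∀ a b : ℝ, (A ∩ Icc a b).Finite)
    (hgap : ∀ a ∈ A, ∀ b ∈ A, a < b → A ∩ Ioo a b = ∅ → ∃ x ∈ B, x ∈ Ioo a b)
    (hS : S.OrdConnected) (hbdd : BddBelow S) {g : ℝ → ℝ≥0∞} (hg : AntitoneOn g S)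
    {C : ℝ≥0∞} (hC : ∀ x ∈ S, g x ≤ C) :
    ∑' x : ↥(A ∩ S), g x ≤ C + ∑' x : ↥(B ∩ S), g x := by
  rcases (A ∩ S).eq_empty_or_nonempty with hempty | ⟨x₀, hx₀A, hx₀S⟩
  · rw [hempty]; simp
  obtain ⟨c, hc⟩ := hbdd
  obtain ⟨m, ⟨⟨hmA, hmS⟩, hmx₀⟩, hmin⟩ :=
    exists_min_image (A ∩ S ∩ Iic x₀) id
      ((hfin c x₀).subset fun x hx => ⟨hx.1.1, hc hx.1.2, hx.2⟩)
      ⟨x₀, ⟨hx₀A, hx₀S⟩, self_mem_Iic⟩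
  have hm : ∀ x ∈ A ∩ S, m ≤ x := fun x hx => by
    rcases le_total x x₀ with h | h
    · exact hmin x ⟨hx, h⟩
    · exact hmx₀.trans h
  have hpred : ∀ x : ↥((A ∩ S) \ {m}), ∃ y : ↥(B ∩ S), (y : ℝ) < x ∧
      ∀ z ∈ A ∩ S, z < x → z < y := by
    rintro ⟨x, hx, hxm⟩
    have hmx : m < x := lt_of_le_of_ne (hm x hx) (Ne.symm hxm)
    obtain ⟨p, ⟨hpA, hmp, hpx⟩, hmax⟩ :=
      exists_max_image (A ∩ Ico m x) id
        ((hfin m x).subset fun z hz => ⟨hz.1, hz.2.1, hz.2.2.le⟩) ⟨m, hmA, le_rfl, hmx⟩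
    obtain ⟨y, hyB, hpy, hyx⟩ := hgap p hpA x hx.1 hpx <| by
      refine eq_empty_of_forall_notMem fun z hz => ?_
      exact (hmax z ⟨hz.1, hmp.trans hz.2.1.le, hz.2.2⟩).not_gt hz.2.1
    exact ⟨⟨y, hyB, hS.out hmS hx.2 ⟨hmp.trans hpy.le, hyx.le⟩⟩, hyx,
      fun z hz hzx => (hmax z ⟨hz.1, hm z hz, hzx⟩).trans_lt hpy⟩
  choose φ hφlt hφgt using hpred
  have hmono : StrictMono φ := fun x x' h =>
    (hφlt x).trans (hφgt x' x x.2.1 h)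
  have hunion : A ∩ S = {m} ∪ ((A ∩ S) \ {m}) := by
    rw [union_sdiff_self, eq_comm, union_eq_right, singleton_subset_iff]
    exact ⟨hmA, hmS⟩
  calc ∑' x : ↥(A ∩ S), g x
      = ∑' x : ↥({m} ∪ ((A ∩ S) \ {m})), g x := by rw [← hunion]
    _ ≤ ∑' x : ↥({m} : Set ℝ), g x + ∑' x : ↥((A ∩ S) \ {m}), g x :=
        ENNReal.tsum_union_le g _ _
    _ ≤ C + ∑' x : ↥(B ∩ S), g x := by
        rw [tsum_singleton m g]
        refine add_le_add (hC m hmS) ?_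
        refine le_trans (ENNReal.tsum_le_tsum fun x => ?_)
          (ENNReal.tsum_comp_le_tsum_of_injective hmono.injective fun y : ↥(B ∩ S) => g y)
        exact hg (φ x).2.2 x.2.1.2 (hφlt x).le

/-- A sum over the points of `A` with absolute value in a set of positive reals splits into
contributions of the positive and the negative points. -/
theorem tsum_abs_mem_eq_add (A : Set ℝ) {S : Set ℝ} (hS : ∀ s ∈ S, 0 < s) (g : ℝ → ℝ≥0∞) :
    ∑' x : ↥{t | t ∈ A ∧ |t| ∈ S}, g |(x : ℝ)|
      = ∑' x : ↥(A ∩ S), g x + ∑' x : ↥(-A ∩ S), g x := by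
  have hset : {t | t ∈ A ∧ |t| ∈ S} = (A ∩ S) ∪ Neg.neg '' (-A ∩ S) := by
    ext t
    simp only [mem_ofPred_eq, mem_union, mem_inter_iff, image_neg_eq_neg, Set.mem_neg, neg_neg,
      ← and_or_left, and_congr_right_iff]
    intro _
    refine ⟨fun h => ?_, ?_⟩
    · rcases abs_choice t with ht | ht <;> rw [ht] at h
      exacts [Or.inl h, Or.inr h]
    · rintro (h | h)
      · rwa [abs_of_pos (hS _ h)]
      · rwa [abs_of_neg (neg_pos.mp (hS _ h))]
  have hdisj : Disjoint (A ∩ S) (Neg.neg '' (-A ∩ S)) := by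
    rw [disjoint_left]
    rintro _ ⟨-, ht⟩ ⟨s, ⟨-, hs⟩, rfl⟩
    linarith [hS _ ht, hS _ hs]
  rw [hset, ENNReal.summable.tsum_union_disjoint (f := fun t : ℝ => g |t|) hdisj ENNReal.summable,
    tsum_image (fun t : ℝ => g |t|) neg_injective.injOn]
  congr 1
  · exact tsum_congr fun x => by rw [abs_of_pos (hS _ x.2.2)]
  · exact tsum_congr fun x => by rw [abs_neg, abs_of_pos (hS _ x.2.2)]

/-- The two-sided version of `tsum_inter_le_add_tsum_inter`. -/
theorem tsum_abs_mem_le_add {A B S : Set ℝ}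
    (hfin : ∀ a b : ℝ, (A ∩ Icc a b).Finite)
    (hgap : ∀ a ∈ A, ∀ b ∈ A, a < b → A ∩ Ioo a b = ∅ → ∃ x ∈ B, x ∈ Ioo a b)
    (hS : S.OrdConnected) (hpos : ∀ s ∈ S, 0 < s) {g : ℝ → ℝ≥0∞} (hg : AntitoneOn g S)
    {C : ℝ≥0∞} (hC : ∀ x ∈ S, g x ≤ C) :
    ∑' x : ↥{t | t ∈ A ∧ |t| ∈ S}, g |(x : ℝ)|
      ≤ 2 * C + ∑' x : ↥{t | t ∈ B ∧ |t| ∈ S}, g |(x : ℝ)| := by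
  have hbdd : BddBelow S := ⟨0, fun s hs => (hpos s hs).le⟩
  have hfin_neg : ∀ a b : ℝ, (-A ∩ Icc a b).Finite := fun a b => by
    have h := (hfin (-b) (-a)).neg
    rwa [inter_neg, neg_Icc, neg_neg, neg_neg] at h
  have hgap_neg : ∀ a ∈ -A, ∀ b ∈ -A, a < b → -A ∩ Ioo a b = ∅ →
      ∃ x ∈ -B, x ∈ Ioo a b := by
    intro a ha b hb hab hempty
    obtain ⟨x, hx, hbx, hxa⟩ := hgap (-b) hb (-a) ha (neg_lt_neg hab) <| by
      rw [← neg_eq_empty, inter_neg, neg_Ioo, neg_neg, neg_neg, hempty]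
    exact ⟨-x, by simpa using hx, by linarith, by linarith⟩
  rw [tsum_abs_mem_eq_add A hpos, tsum_abs_mem_eq_add B hpos, two_mul, add_add_add_comm]
  exact add_le_add (tsum_inter_le_add_tsum_inter hfin hgap hS hbdd hg hC)
    (tsum_inter_le_add_tsum_inter hfin_neg hgap_neg hS hbdd hg hC)

/-- Over a bounded annulus, the real-valued sums of `1 / |t|` satisfy the two-sided comparison. -/
theorem tsum_one_div_abs_le_add {A B : Set ℝ}
    (hAfin : ∀ a b : ℝ, (A ∩ Icc a b).Finite) (hBfin : ∀ a b : ℝ, (B ∩ Icc a b).Finite)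
    (hgap : ∀ a ∈ A, ∀ b ∈ A, a < b → A ∩ Ioo a b = ∅ → ∃ x ∈ B, x ∈ Ioo a b)
    {r R : ℝ} (hr : 0 < r) :
    ∑' x : ↥{t | t ∈ A ∧ r ≤ |t| ∧ |t| < R}, 1 / |(x : ℝ)|
      ≤ 2 / r + ∑' x : ↥{t | t ∈ B ∧ r ≤ |t| ∧ |t| < R}, 1 / |(x : ℝ)| := by
  have hofReal : ∀ D : Set ℝ, (∀ a b : ℝ, (D ∩ Icc a b).Finite) →
      ∑' x : ↥{t | t ∈ D ∧ r ≤ |t| ∧ |t| < R}, ENNReal.ofReal (1 / |(x : ℝ)|)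
        = ENNReal.ofReal (∑' x : ↥{t | t ∈ D ∧ r ≤ |t| ∧ |t| < R}, 1 / |(x : ℝ)|) := by
    intro D hD
    have : Finite ↥{t | t ∈ D ∧ r ≤ |t| ∧ |t| < R} :=
      ((hD (-R) R).subset fun t ht => ⟨ht.1, abs_le.mp ht.2.2.le⟩).to_subtype
    exact (ENNReal.ofReal_tsum_of_nonneg (fun _ => by positivity) Summable.of_finite).symm
  have hanti : AntitoneOn (fun t : ℝ => ENNReal.ofReal (1 / t)) (Ico r R) :=
    fun s hs t _ hst =>
      ENNReal.ofReal_le_ofReal (one_div_le_one_div_of_le (hr.trans_le hs.1) hst)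
  have h : ∑' x : ↥{t | t ∈ A ∧ r ≤ |t| ∧ |t| < R}, ENNReal.ofReal (1 / |(x : ℝ)|)
      ≤ 2 * ENNReal.ofReal (1 / r)
        + ∑' x : ↥{t | t ∈ B ∧ r ≤ |t| ∧ |t| < R}, ENNReal.ofReal (1 / |(x : ℝ)|) :=
    tsum_abs_mem_le_add hAfin hgap ordConnected_Ico (fun s hs => hr.trans_le hs.1) hanti
      fun t ht => ENNReal.ofReal_le_ofReal (one_div_le_one_div_of_le hr ht.1)
  rw [hofReal A hAfin, hofReal B hBfin, ← ENNReal.ofReal_ofNat 2,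
    ← ENNReal.ofReal_mul zero_le_two, mul_one_div,
    ← ENNReal.ofReal_add (by positivity) (tsum_nonneg fun _ => by positivity)] at h
  exact (ENNReal.ofReal_le_ofReal_iff
    (add_nonneg (by positivity) (tsum_nonneg fun _ => by positivity))).mp h

/-- Comparison of the counting measures of two strictly interlacing locally finite
sets `L` and `L'`: for `α ∈ (0,1)` and `ℓ ≥ 1`,
`∫ 1(|λ|>ℓ)/|λ|^{1+α} dΞ' ≤ 2/ℓ + ∫ 1(|λ|>ℓ)/|λ|^{1+α} dΞ`, and for `ℓ'' > ℓ' ≥ 1`,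
`|∫ 1(ℓ'≤|λ|<ℓ'')/|λ| dΞ' − ∫ 1(ℓ'≤|λ|<ℓ'')/|λ| dΞ| ≤ 4/ℓ'`. -/
theorem interlacing_counting_comparison
    (L L' : Set ℝ)
    (hLfin : ∀ a b : ℝ, (L ∩ Set.Icc a b).Finite)
    (hL'fin : ∀ a b : ℝ, (L' ∩ Set.Icc a b).Finite)
    (hinter1 : ∀ a ∈ L, ∀ b ∈ L, a < b → L ∩ Set.Ioo a b = ∅ →
      ∃! x : ℝ, x ∈ L' ∩ Set.Ioo a b)
    (hinter2 : ∀ a ∈ L', ∀ b ∈ L', a < b → L' ∩ Set.Ioo a b = ∅ →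
      ∃! x : ℝ, x ∈ L ∩ Set.Ioo a b) :
    ∀ α ∈ Set.Ioo (0 : ℝ) 1, ∀ ℓ : ℝ, 1 ≤ ℓ →
      ((∑' x : ↥{t | t ∈ L' ∧ ℓ < |t|}, ENNReal.ofReal (1 / |(x : ℝ)| ^ (1 + α)))
        ≤ ENNReal.ofReal (2 / ℓ)
          + (∑' x : ↥{t | t ∈ L ∧ ℓ < |t|}, ENNReal.ofReal (1 / |(x : ℝ)| ^ (1 + α))))
      ∧ ∀ ℓ' ℓ'' : ℝ, 1 ≤ ℓ' → ℓ' < ℓ'' →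
          |(∑' x : ↥{t | t ∈ L' ∧ ℓ' ≤ |t| ∧ |t| < ℓ''}, (1 / |(x : ℝ)|))
            - (∑' x : ↥{t | t ∈ L ∧ ℓ' ≤ |t| ∧ |t| < ℓ''}, (1 / |(x : ℝ)|))| ≤ 4 / ℓ' := by
  have hgap1 : ∀ a ∈ L, ∀ b ∈ L, a < b → L ∩ Ioo a b = ∅ → ∃ x ∈ L', x ∈ Ioo a b :=
    fun a ha b hb hab h => (hinter1 a ha b hb hab h).exists
  have hgap2 : ∀ a ∈ L', ∀ b ∈ L', a < b → L' ∩ Ioo a b = ∅ → ∃ x ∈ L, x ∈ Ioo a b :=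
    fun a ha b hb hab h => (hinter2 a ha b hb hab h).exists
  intro α hα ℓ hℓ
  have hα0 : 0 < α := hα.1
  have hℓ0 : 0 < ℓ := one_pos.trans_le hℓ
  refine ⟨?_, fun ℓ' ℓ'' hℓ' _ => ?_⟩
  · have hanti : AntitoneOn (fun t : ℝ => ENNReal.ofReal (1 / t ^ (1 + α))) (Ioi ℓ) := by
      intro s hs t _ hst
      have hs0 : 0 < s := hℓ0.trans hs
      exact ENNReal.ofReal_le_ofReal (one_div_le_one_div_of_le (by positivity)
        (Real.rpow_le_rpow hs0.le hst (by positivity)))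
    have hbound : ∀ t ∈ Ioi ℓ, ENNReal.ofReal (1 / t ^ (1 + α)) ≤ ENNReal.ofReal (1 / ℓ) := by
      intro t ht
      refine ENNReal.ofReal_le_ofReal (one_div_le_one_div_of_le hℓ0 (ht.le.trans ?_))
      exact Real.self_le_rpow_of_one_le (hℓ.trans ht.le) (by linarith)
    have h := tsum_abs_mem_le_add hL'fin hgap2 ordConnected_Ioi (fun s hs => hℓ0.trans hs)
      hanti hbound
    rwa [← ENNReal.ofReal_ofNat 2, ← ENNReal.ofReal_mul zero_le_two, mul_one_div] at h
  · have hℓ'0 : 0 < ℓ' := one_pos.trans_le hℓ'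
    have h1 := tsum_one_div_abs_le_add hL'fin hLfin hgap2 (R := ℓ'') hℓ'0
    have h2 := tsum_one_div_abs_le_add hLfin hL'fin hgap1 (R := ℓ'') hℓ'0
    have h3 : 2 / ℓ' ≤ 4 / ℓ' := by gcongr; norm_num
    rw [abs_le]
    constructor <;> linarith
end
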